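/- arXiv:1904.03313 — 2 statements merged into one kernel-verified Lean document; each statement's English description precedes it below -/
import Mathlib

section
/- Let (G_n) be any sequence of finite graphs with |V_n| = n and let f : X → ℝ. Define the decoupled estimator X̂^dec with entries X̂^dec_{uv} = E[f(θ_u)|Y^{(ε)}_{G_n}] · E[f(θ_v)|Y^{(ε)}_{G_n}]. Then for Lebesgue-almost every ε ∈ (0,1): lim_{n→∞} ( R_n(X̂^dec; f) − R_n^Bayes(f) ) = 0. -/
open MeasureTheory ProbabilityTheory Filter
open scoped ENNReal Classical

noncomputable section

def gball {V : Type*} (G : SimpleGraph V) (u : V) (l : ℕ) : Set V :=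
  {v | ∃ w : G.Walk u v, w.length ≤ l}

def vBoundary {V : Type*} (G : SimpleGraph V) (S : Set V) : Set V :=
  {u | u ∈ S ∧ ∃ v, v ∉ S ∧ G.Adj u v}

def Amenable {V : Type*} (G : SimpleGraph V) : Prop :=
  ∀ δ : ℝ, 0 < δ → ∃ S : Set V, S.Finite ∧ S.Nonempty ∧
    ((vBoundary G S).ncard : ℝ) < δ * (S.ncard : ℝ)

def VertexTransitive {V : Type*} (G : SimpleGraph V) : Prop :=
  ∀ u v : V, ∃ φ : G ≃g G, φ u = v

def LocallyFiniteGraph {V : Type*} (G : SimpleGraph V) : Prop :=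
  ∀ v : V, (G.neighborSet v).Finite

def graphOf {V : Type*} (E : Set (V × V)) : SimpleGraph V :=
  SimpleGraph.fromRel (fun u v => (u, v) ∈ E)

def BallIso {V W : Type*} (G : SimpleGraph V) (u : V) (H : SimpleGraph W) (o : W)
    (l : ℕ) : Prop :=
  ∃ φ : gball G u l ≃ gball H o l,
    (∀ hu : u ∈ gball G u l, ((φ ⟨u, hu⟩ : gball H o l) : W) = o) ∧
      ∀ a b : gball G u l, G.Adj a b ↔ H.Adj (φ a) (φ b)

def LocalWeakLimit {W : Type*} (Gn : ∀ n : ℕ, SimpleGraph (Fin n))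
    (H : SimpleGraph W) (o : W) : Prop :=
  ∀ l : ℕ, Tendsto
    (fun n : ℕ => (Nat.card {u : Fin n // BallIso (Gn n) u H o l} : ℝ) / n) atTop (nhds 1)

structure Model (X Y' : Type*) {V : Type*} (Q : X → X → Y' → ℝ) (E : Set (V × V))
    [Fintype X] [Fintype Y'] where
  Ω : Type
  mΩ : MeasurableSpace Ω
  P : @Measure Ω mΩ
  probP : @IsProbabilityMeasure Ω mΩ P
  θ : V → Ω → X
  Yobs : V × V → Ω → Y'
  U : V → Ω → ℝ
  measθ : ∀ v, @Measurable Ω X mΩ ⊤ (θ v)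
  measY : ∀ e, @Measurable Ω Y' mΩ ⊤ (Yobs e)
  measU : ∀ v, @Measurable Ω ℝ mΩ _ (U v)
  lawθY : ∀ (S : Finset V) (F : Finset (V × V)),
    (∀ e ∈ F, e ∈ E ∧ e.1 ∈ S ∧ e.2 ∈ S) →
    ∀ (σ : V → X) (y : V × V → Y'),
      (P {ω | (∀ v ∈ S, θ v ω = σ v) ∧ ∀ e ∈ F, Yobs e ω = y e}).toReal
        = ((Fintype.card X : ℝ)⁻¹) ^ S.card * ∏ e ∈ F, Q (σ e.1) (σ e.2) (y e)
  lawU : ∀ (T : Finset V) (a : V → ℝ), (∀ v, a v ∈ Set.Icc (0:ℝ) 1) →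
    ∀ (S : Finset V) (F : Finset (V × V)) (σ : V → X) (y : V × V → Y'),
      (P {ω | (∀ v ∈ T, U v ω ≤ a v) ∧ (∀ v ∈ S, θ v ω = σ v) ∧
          ∀ e ∈ F, Yobs e ω = y e}).toReal
        = (∏ v ∈ T, a v) *
          (P {ω | (∀ v ∈ S, θ v ω = σ v) ∧ ∀ e ∈ F, Yobs e ω = y e}).toReal

attribute [instance] Model.mΩ

namespace Model

variable {X Y' V : Type*} [Fintype X] [Fintype Y'] {Q : X → X → Y' → ℝ} {E : Set (V × V)}

def ξ (M : Model X Y' Q E) (ε : ℝ) (v : V) (ω : M.Ω) : Option X :=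
  if M.U v ω ≤ ε then some (M.θ v ω) else none

def obsAlg (M : Model X Y' Q E) (ε : ℝ) (S : Set V) : MeasurableSpace M.Ω :=
  (⨆ e ∈ {e : V × V | e ∈ E ∧ e.1 ∈ S ∧ e.2 ∈ S}, MeasurableSpace.comap (M.Yobs e) ⊤) ⊔
    ⨆ v ∈ S, MeasurableSpace.comap (M.ξ ε v) ⊤

def marg (M : Model X Y' Q E) (ε : ℝ) (S : Set V) (u : V) (x : X) : M.Ω → ℝ :=
  M.P[Set.indicator {ω | M.θ u ω = x} (fun _ => (1 : ℝ)) | M.obsAlg ε S]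

end Model

def riskOf {X Y' : Type*} [Fintype X] [Fintype Y'] {n : ℕ} {Q : X → X → Y' → ℝ}
    {E : Set (Fin n × Fin n)} (M : Model X Y' Q E) (f : X → ℝ)
    (Xh : M.Ω → Fin n → Fin n → ℝ) : ℝ :=
  ((n : ℝ) ^ 2)⁻¹ * ∫ ω, (∑ u, ∑ v, (f (M.θ u ω) * f (M.θ v ω) - Xh ω u v) ^ 2) ∂M.P

/-!
Write `X_v = f(θ_v)`, let `A_v` be the event that the side information reveals `θ_v`, and let `𝓖` be
the σ-algebra of the observations. By Pythagoras the excess risk of the decoupled estimator is the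
average over pairs of `E[Cov(X_u, X_v | 𝓖)²]`. If `θ_u` influences the posterior of `X_v`, then
revealing `θ_u` increases `E[E[X_v | 𝓖]²]`; quantitatively, `E[Cov(X_u, X_v | 𝓖)²]` is at most
`‖f‖∞²` times this increase. Since `A_u` is independent of everything else, and on `A_u` the label
`θ_u` is already known, the increase equals `Cov(1_{A_u}, E[X_v | 𝓖]²) / ε`. Summed over `u` and `v`
the covariances become `Cov(∑ 1_{A_u}, ∑ E[X_v | 𝓖]²)`, which by Cauchy–Schwarz is `O(√n · n)`,
as the `A_u` are independent. Division by `n²` leaves `O(1 / √n)`, for every `ε ∈ (0, 1]`.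
-/

theorem isPiSystem_image2_inter {Ω : Type*} {C D : Set (Set Ω)} (hC : IsPiSystem C)
    (hD : IsPiSystem D) : IsPiSystem (Set.image2 (· ∩ ·) C D) := by
  rintro _ ⟨a, ha, b, hb, rfl⟩ _ ⟨c, hc, d, hd, rfl⟩ hne
  rw [Set.inter_inter_inter_comm] at hne ⊢
  exact ⟨a ∩ c, hC a ha c hc hne.left, b ∩ d, hD b hb d hd hne.right, rfl⟩

theorem sup_eq_generateFrom_image2_inter {Ω : Type*} (m₁ m₂ : MeasurableSpace Ω) :
    m₁ ⊔ m₂ = MeasurableSpace.generateFrom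
      (Set.image2 (· ∩ ·) {s | MeasurableSet[m₁] s} {s | MeasurableSet[m₂] s}) := by
  refine le_antisymm (sup_le ?_ ?_) (MeasurableSpace.generateFrom_le ?_)
  · exact fun a ha => .basic _ ⟨a, ha, _, @MeasurableSet.univ _ m₂, Set.inter_univ a⟩
  · exact fun b hb => .basic _ ⟨_, @MeasurableSet.univ _ m₁, b, hb, Set.univ_inter b⟩
  · rintro _ ⟨a, ha, b, hb, rfl⟩
    exact MeasurableSet.inter (le_sup_left (a := m₁) a ha) (le_sup_right (a := m₁) b hb)

section ConditionalExpectation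

variable {Ω : Type*} {m m₁ m₂ m' mΩ : MeasurableSpace Ω} {μ : Measure Ω}

theorem setIntegral_eq_measureReal_mul_integral_of_indep (hm : m ≤ mΩ) (hm₂ : m₂ ≤ mΩ)
    (hind : Indep m m₂ μ) {f : Ω → ℝ} (hf : StronglyMeasurable[m] f) {A : Set Ω}
    (hA : MeasurableSet[m₂] A) : ∫ ω in A, f ω ∂μ = μ.real A * ∫ ω, f ω ∂μ :=
  Indep.setIntegral_eq_mul (f := id) hm₂
    (indep_of_indep_of_le_right hind.symm hf.measurable.comap_le)
    (hf.mono hm).measurable.aemeasurable hA aestronglyMeasurable_id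

theorem condExp_sup_ae_eq_of_indep [IsFiniteMeasure μ] (hm₁ : m₁ ≤ m) (hm : m ≤ mΩ)
    (hm₂ : m₂ ≤ mΩ) (hind : Indep m m₂ μ) {f : Ω → ℝ} (hf : StronglyMeasurable[m] f)
    (hfi : Integrable f μ) : μ[f | m₁ ⊔ m₂] =ᵐ[μ] μ[f | m₁] := by
  have hsup : m₁ ⊔ m₂ ≤ mΩ := sup_le (hm₁.trans hm) hm₂
  have hcm : StronglyMeasurable[m₁ ⊔ m₂] (μ[f | m₁]) := stronglyMeasurable_condExp.mono le_sup_left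
  have setIntegral_inter {a b : Set Ω} (ha : MeasurableSet[m₁] a) (hb : MeasurableSet[m₂] b)
      {g : Ω → ℝ} (hg : StronglyMeasurable[m] g) :
      ∫ ω in a ∩ b, g ω ∂μ = μ.real b * ∫ ω in a, g ω ∂μ := by
    have ha' := hm₁ _ ha
    rw [Set.inter_comm, ← setIntegral_indicator (hm _ ha'),
      setIntegral_eq_measureReal_mul_integral_of_indep hm hm₂ hind (hg.indicator ha') hb,
      integral_indicator (hm _ ha')]
  refine (ae_eq_condExp_of_forall_setIntegral_eq hsup hfi
    (fun _ _ _ => integrable_condExp.integrableOn) (fun s hs _ => ?_) hcm.aestronglyMeasurable).symm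
  induction s, hs using MeasurableSpace.induction_on_inter (sup_eq_generateFrom_image2_inter m₁ m₂)
    (isPiSystem_image2_inter (@MeasurableSpace.isPiSystem_measurableSet _ m₁)
      (@MeasurableSpace.isPiSystem_measurableSet _ m₂)) with
  | empty => simp only [setIntegral_empty]
  | basic t ht =>
    obtain ⟨a, ha, b, hb, rfl⟩ := ht
    rw [setIntegral_inter ha hb (stronglyMeasurable_condExp.mono hm₁), setIntegral_inter ha hb hf,
      setIntegral_condExp (hm₁.trans hm) hfi ha]
  | compl t ht ih =>
    rw [setIntegral_compl (hsup _ ht) integrable_condExp, setIntegral_compl (hsup _ ht) hfi,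
      integral_condExp (hm₁.trans hm), ih (measure_lt_top μ t)]
  | iUnion s hd hs ih =>
    rw [integral_iUnion (fun i => hsup _ (hs i)) hd integrable_condExp.integrableOn,
      integral_iUnion (fun i => hsup _ (hs i)) hd hfi.integrableOn]
    exact tsum_congr fun i => ih i (measure_lt_top μ _)

variable [IsFiniteMeasure μ]

theorem integral_mul_eq_integral_condExp_mul (hm : m ≤ mΩ) {X Y : Ω → ℝ} (hX : MemLp X 2 μ)
    (hY : MemLp Y 2 μ) (hYm : AEStronglyMeasurable[m] Y μ) :
    ∫ ω, X ω * Y ω ∂μ = ∫ ω, μ[X | m] ω * Y ω ∂μ :=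
  (integral_condExp hm).symm.trans (integral_congr_ae
    (condExp_mul_of_aestronglyMeasurable_right hYm (hX.integrable_mul hY)
      (hX.integrable one_le_two)))

theorem integral_sq_sub_eq_add_condExp (hm : m ≤ mΩ) {X Y : Ω → ℝ} (hX : MemLp X 2 μ)
    (hY : MemLp Y 2 μ) (hYm : AEStronglyMeasurable[m] Y μ) :
    ∫ ω, (X ω - Y ω) ^ 2 ∂μ
      = ∫ ω, (X ω - μ[X | m] ω) ^ 2 ∂μ + ∫ ω, (μ[X | m] ω - Y ω) ^ 2 ∂μ := by
  have hE : MemLp (μ[X | m]) 2 μ := hX.condExp one_le_two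
  have hD : MemLp (μ[X | m] - Y) 2 μ := hE.sub hY
  have orthogonal : ∫ ω, (X - μ[X | m]) ω * (μ[X | m] - Y) ω ∂μ = 0 := by
    have h := integral_mul_eq_integral_condExp_mul hm hX hD
      (stronglyMeasurable_condExp.aestronglyMeasurable.sub hYm)
    have iX : Integrable (fun ω => X ω * (μ[X | m] - Y) ω) μ := hX.integrable_mul hD
    have iE : Integrable (fun ω => μ[X | m] ω * (μ[X | m] - Y) ω) μ := hE.integrable_mul hD
    simp only [Pi.sub_apply X, sub_mul]
    rw [integral_sub iX iE, h, sub_self]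
  have iXE : Integrable (fun ω => (X ω - μ[X | m] ω) ^ 2) μ := (hX.sub hE).integrable_sq
  have iD : Integrable (fun ω => (μ[X | m] ω - Y ω) ^ 2) μ := hD.integrable_sq
  have iXED : Integrable (fun ω => 2 * ((X - μ[X | m]) ω * (μ[X | m] - Y) ω)) μ :=
    ((hX.sub hE).integrable_mul hD).const_mul 2
  calc ∫ ω, (X ω - Y ω) ^ 2 ∂μ
      = ∫ ω, ((X ω - μ[X | m] ω) ^ 2 + (μ[X | m] ω - Y ω) ^ 2
          + 2 * ((X - μ[X | m]) ω * (μ[X | m] - Y) ω)) ∂μ := by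
        congr 1 with ω
        simp only [Pi.sub_apply]
        ring
    _ = _ := by
        rw [integral_add (by exact iXE.add iD) iXED, integral_add iXE iD, integral_const_mul,
          orthogonal, mul_zero, add_zero]

theorem integral_sq_sub_condExp_eq (hm : m ≤ mΩ) {X : Ω → ℝ} (hX : MemLp X 2 μ) :
    ∫ ω, (X ω - μ[X | m] ω) ^ 2 ∂μ = ∫ ω, X ω ^ 2 ∂μ - ∫ ω, μ[X | m] ω ^ 2 ∂μ := by
  have h := integral_sq_sub_eq_add_condExp hm hX MemLp.zero' aestronglyMeasurable_const
  simp only [sub_zero] at h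
  exact eq_sub_of_add_eq h.symm

theorem integral_sq_condExp_le (hm : m ≤ mΩ) {X : Ω → ℝ} (hX : MemLp X 2 μ) :
    ∫ ω, μ[X | m] ω ^ 2 ∂μ ≤ ∫ ω, X ω ^ 2 ∂μ := by
  rw [← sub_nonneg, ← integral_sq_sub_condExp_eq hm hX]
  exact integral_nonneg fun _ => sq_nonneg _

theorem integral_sq_condExp_sub_condExp (hmm : m ≤ m') (hm' : m' ≤ mΩ) {X : Ω → ℝ}
    (hX : MemLp X 2 μ) :
    ∫ ω, (μ[X | m'] ω - μ[X | m] ω) ^ 2 ∂μ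
      = ∫ ω, μ[X | m'] ω ^ 2 ∂μ - ∫ ω, μ[X | m] ω ^ 2 ∂μ := by
  have tower : μ[μ[X | m'] | m] =ᵐ[μ] μ[X | m] := condExp_condExp_of_le hmm hm'
  have h := integral_sq_sub_condExp_eq (hmm.trans hm') (hX.condExp one_le_two (m := m'))
  rwa [integral_congr_ae (tower.mono fun ω hω => congrArg (fun x => (μ[X | m'] ω - x) ^ 2) hω),
    integral_congr_ae (tower.mono fun ω hω => congrArg (· ^ 2) hω)] at h

/-- The conditional covariance `E[XY | m] - E[X | m] E[Y | m]`. Its mean square is the amount by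
which the product of the conditional means of `X` and `Y` misses the conditional mean of `XY`. -/
def condCov {Ω : Type*} {_ : MeasurableSpace Ω} (X Y : Ω → ℝ) (μ : Measure Ω)
    (m : MeasurableSpace Ω) : Ω → ℝ :=
  μ[X * Y | m] - μ[X | m] * μ[Y | m]

theorem condCov_ae_eq_condExp_mul_sub (hmm : m ≤ m') (hm' : m' ≤ mΩ) {X Y : Ω → ℝ}
    (hXm : StronglyMeasurable[m'] X) (hX : MemLp X 2 μ) (hY : MemLp Y 2 μ) :
    condCov X Y μ m =ᵐ[μ] μ[X * (μ[Y | m'] - μ[Y | m]) | m] := by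
  have hE' : MemLp (μ[Y | m']) 2 μ := hY.condExp one_le_two
  have hE : MemLp (μ[Y | m]) 2 μ := hY.condExp one_le_two
  have tower : μ[X * Y | m] =ᵐ[μ] μ[X * μ[Y | m'] | m] :=
    (condExp_condExp_of_le hmm hm').symm.trans (condExp_congr_ae
      (condExp_mul_of_stronglyMeasurable_left hXm (hX.integrable_mul hY)
        (hY.integrable one_le_two)))
  have pull_out : μ[X * μ[Y | m] | m] =ᵐ[μ] μ[X | m] * μ[Y | m] :=
    condExp_mul_of_stronglyMeasurable_right stronglyMeasurable_condExp (hX.integrable_mul hE)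
      (hX.integrable one_le_two)
  rw [mul_sub]
  exact (tower.sub pull_out.symm).trans
    (condExp_sub (hX.integrable_mul hE') (hX.integrable_mul hE) m).symm

theorem integral_sq_condCov_le (hmm : m ≤ m') (hm' : m' ≤ mΩ) {X Y : Ω → ℝ} {R : ℝ}
    (hXm : StronglyMeasurable[m'] X) (hXR : ∀ᵐ ω ∂μ, |X ω| ≤ R) (hY : MemLp Y 2 μ) :
    ∫ ω, condCov X Y μ m ω ^ 2 ∂μ
      ≤ R ^ 2 * (∫ ω, μ[Y | m'] ω ^ 2 ∂μ - ∫ ω, μ[Y | m] ω ^ 2 ∂μ) := by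
  have hX : MemLp X ⊤ μ := memLp_top_of_bound (hXm.mono hm').aestronglyMeasurable R hXR
  have hD : MemLp (μ[Y | m'] - μ[Y | m]) 2 μ :=
    (hY.condExp one_le_two).sub (hY.condExp one_le_two)
  have hXD : MemLp (X * (μ[Y | m'] - μ[Y | m])) 2 μ := hD.mul hX
  calc ∫ ω, condCov X Y μ m ω ^ 2 ∂μ
      = ∫ ω, μ[X * (μ[Y | m'] - μ[Y | m]) | m] ω ^ 2 ∂μ :=
        integral_congr_ae ((condCov_ae_eq_condExp_mul_sub hmm hm' hXm (hX.mono_exponent le_top)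
          hY).mono fun ω hω => congrArg (· ^ 2) hω)
    _ ≤ ∫ ω, (X * (μ[Y | m'] - μ[Y | m])) ω ^ 2 ∂μ := integral_sq_condExp_le (hmm.trans hm') hXD
    _ ≤ ∫ ω, R ^ 2 * (μ[Y | m'] - μ[Y | m]) ω ^ 2 ∂μ := by
        refine integral_mono_ae hXD.integrable_sq (hD.integrable_sq.const_mul _)
          (hXR.mono fun ω hω => ?_)
        simp only [Pi.mul_apply, mul_pow]
        exact mul_le_mul_of_nonneg_right (sq_le_sq' (neg_le_of_abs_le hω) (le_of_abs_le hω))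
          (sq_nonneg _)
    _ = _ := by
        rw [integral_const_mul, ← integral_sq_condExp_sub_condExp hmm hm' hY]
        rfl

end ConditionalExpectation

section Independence

variable {Ω : Type*} {mΩ : MeasurableSpace Ω} {μ : Measure Ω}

section FiniteMeasure

variable [IsFiniteMeasure μ]

theorem sq_covariance_le_variance_mul_variance {X Y : Ω → ℝ} (hX : MemLp X 2 μ)
    (hY : MemLp Y 2 μ) : cov[X, Y; μ] ^ 2 ≤ Var[X; μ] * Var[Y; μ] := by
  have nonneg (t : ℝ) : 0 ≤ Var[X; μ] * (t * t) + 2 * cov[X, Y; μ] * t + Var[Y; μ] := by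
    have h := variance_nonneg (t • X + Y) μ
    rw [variance_add (hX.const_smul t) hY, variance_smul, covariance_smul_left] at h
    linarith
  have h := discrim_le_zero nonneg
  rw [discrim] at h
  linarith

theorem memLp_indicator_one {A : Set Ω} (hA : MeasurableSet A) (p : ℝ≥0∞) :
    MemLp (A.indicator (1 : Ω → ℝ)) p μ :=
  memLp_indicator_const p hA 1 (.inr (measure_ne_top μ A))

end FiniteMeasure

variable [IsProbabilityMeasure μ]

theorem indep_sup_left_of_indep_sup_right {m m₁ m₂ : MeasurableSpace Ω} (hm : m ≤ mΩ)
    (hm₁ : m₁ ≤ mΩ) (hm₂ : m₂ ≤ mΩ) (h : Indep m (m₁ ⊔ m₂) μ) (h₁₂ : Indep m₁ m₂ μ) :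
    Indep (m ⊔ m₁) m₂ μ := by
  refine IndepSets.indep (sup_le hm hm₁) hm₂
    (isPiSystem_image2_inter (@MeasurableSpace.isPiSystem_measurableSet _ m)
      (@MeasurableSpace.isPiSystem_measurableSet _ m₁))
    (@MeasurableSpace.isPiSystem_measurableSet _ m₂) (sup_eq_generateFrom_image2_inter m m₁)
    (MeasurableSpace.generateFrom_measurableSet).symm ((IndepSets_iff _ _ μ).2 ?_)
  rintro _ t ⟨a, ha, b, hb, rfl⟩ ht
  have hb' : MeasurableSet[m₁ ⊔ m₂] b := le_sup_left (a := m₁) b hb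
  have ht' : MeasurableSet[m₁ ⊔ m₂] t := le_sup_right (a := m₁) t ht
  have indep_iff := (Indep_iff m (m₁ ⊔ m₂) μ).1 h
  rw [Set.inter_assoc, indep_iff a _ ha (hb'.inter ht'), indep_iff a b ha hb',
    (Indep_iff m₁ m₂ μ).1 h₁₂ b t hb ht, mul_assoc]

theorem covariance_indicator_one {X : Ω → ℝ} {A : Set Ω} (hX : MemLp X 2 μ)
    (hA : MeasurableSet A) :
    cov[X, A.indicator 1; μ] = ∫ ω in A, X ω ∂μ - μ.real A * ∫ ω, X ω ∂μ := by
  have hmul : X * A.indicator 1 = A.indicator X := by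
    ext ω
    simp only [Pi.mul_apply, ← Set.indicator_mul_right, Pi.one_apply, mul_one]
  rw [covariance_eq_sub hX (memLp_indicator_one hA 2), hmul, integral_indicator hA,
    integral_indicator_one hA, mul_comm]

variable {V : Type*} {A : V → Set Ω}

theorem indep_sup_generateFrom_image_compl {m : MeasurableSpace Ω} (hm : m ≤ mΩ)
    (hA : ∀ v, MeasurableSet[mΩ] (A v)) (hind : iIndepSet A μ)
    (hmA : Indep m (MeasurableSpace.generateFrom (Set.range A)) μ) (u : V) :
    Indep (m ⊔ MeasurableSpace.generateFrom (A '' {u}ᶜ))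
      (MeasurableSpace.generateFrom {A u}) μ := by
  have others_indep : Indep (MeasurableSpace.generateFrom (A '' {u}ᶜ))
      (MeasurableSpace.generateFrom (A '' {u})) μ := by
    have h := hind.indep_generateFrom_of_disjoint hA {u}ᶜ {u} disjoint_compl_left
    simpa only [Set.image] using h
  have le_range (S : Set V) :
      MeasurableSpace.generateFrom (A '' S) ≤ MeasurableSpace.generateFrom (Set.range A) :=
    MeasurableSpace.generateFrom_mono (Set.image_subset_range A S)
  rw [← Set.image_singleton (f := A)]
  exact indep_sup_left_of_indep_sup_right hm
    (MeasurableSpace.generateFrom_le (Set.forall_mem_image.2 fun v _ => hA v))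
    (MeasurableSpace.generateFrom_le (Set.forall_mem_image.2 fun v _ => hA v))
    (indep_of_indep_of_le_right hmA (sup_le (le_range _) (le_range _))) others_indep

variable [Fintype V]

theorem variance_sum_indicator_le (hA : ∀ v, MeasurableSet (A v)) (hind : iIndepSet A μ) :
    Var[∑ v, (A v).indicator (1 : Ω → ℝ); μ] ≤ Fintype.card V / 4 := by
  have popoviciu (v : V) : Var[(A v).indicator (1 : Ω → ℝ); μ] ≤ 1 / 4 := by
    have h := variance_le_sq_of_bounded (μ := μ) (X := (A v).indicator 1) (a := 0) (b := 1)
      (.of_forall fun ω => ⟨Set.indicator_nonneg (fun _ _ => zero_le_one) ω,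
        Set.indicator_le_self' (fun _ _ => zero_le_one) ω⟩)
      (measurable_one.indicator (hA v)).aemeasurable
    norm_num at h ⊢
    exact h
  have pairwise_indep : Pairwise fun u v =>
      IndepFun ((A u).indicator (1 : Ω → ℝ)) ((A v).indicator 1) μ :=
    fun u v huv => hind.iIndepFun_indicator.indepFun huv
  calc Var[∑ v, (A v).indicator (1 : Ω → ℝ); μ] = ∑ v, Var[(A v).indicator (1 : Ω → ℝ); μ] :=
        IndepFun.variance_sum (fun v _ => memLp_indicator_one (hA v) 2)
          (pairwise_indep.set_pairwise _)
    _ ≤ ∑ _v : V, (1 / 4 : ℝ) := Finset.sum_le_sum fun v _ => popoviciu v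
    _ = _ := by rw [Finset.sum_const, Finset.card_univ, nsmul_eq_mul, mul_one_div]

theorem variance_sum_le_of_mem_Icc {Z : V → Ω → ℝ} {C : ℝ} (hZm : ∀ v, AEMeasurable (Z v) μ)
    (hZ : ∀ᵐ ω ∂μ, ∀ v, Z v ω ∈ Set.Icc 0 C) :
    Var[∑ v, Z v; μ] ≤ (Fintype.card V * C / 2) ^ 2 := by
  have hmem : ∀ᵐ ω ∂μ, (∑ v, Z v) ω ∈ Set.Icc 0 (Fintype.card V * C) := by
    filter_upwards [hZ] with ω hω
    rw [Finset.sum_apply, ← nsmul_eq_mul, ← Finset.card_univ]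
    exact ⟨Finset.sum_nonneg fun v _ => (hω v).1,
      Finset.sum_le_card_nsmul _ _ _ fun v _ => (hω v).2⟩
  simpa only [sub_zero] using
    variance_le_sq_of_bounded hmem (Finset.aemeasurable_sum _ fun v _ => hZm v)

theorem covariance_sum_sum_indicator_le {Z : V → Ω → ℝ} {C : ℝ} (hA : ∀ v, MeasurableSet (A v))
    (hind : iIndepSet A μ) (hC : 0 ≤ C) (hZm : ∀ v, AEMeasurable (Z v) μ)
    (hZ : ∀ᵐ ω ∂μ, ∀ v, Z v ω ∈ Set.Icc 0 C) :
    cov[∑ u, (A u).indicator 1, ∑ v, Z v; μ]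
      ≤ C / 4 * (Fintype.card V * √(Fintype.card V)) := by
  have hZ2 (v : V) : MemLp (Z v) 2 μ := .of_bound (hZm v).aestronglyMeasurable C
    (hZ.mono fun ω hω => (abs_of_nonneg (hω v).1).trans_le (hω v).2)
  have cauchy_schwarz := sq_covariance_le_variance_mul_variance (μ := μ)
    (memLp_finsetSum' Finset.univ fun u _ => memLp_indicator_one (hA u) 2)
    (memLp_finsetSum' Finset.univ fun v _ => hZ2 v)
  refine le_of_abs_le (abs_le_of_sq_le_sq (cauchy_schwarz.trans ?_) (by positivity))
  calc Var[∑ u, (A u).indicator (1 : Ω → ℝ); μ] * Var[∑ v, Z v; μ]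
      ≤ Fintype.card V / 4 * (Fintype.card V * C / 2) ^ 2 :=
        mul_le_mul (variance_sum_indicator_le hA hind) (variance_sum_le_of_mem_Icc hZm hZ)
          (variance_nonneg _ _) (by positivity)
    _ = (C / 4 * (Fintype.card V * √(Fintype.card V))) ^ 2 := by
        rw [mul_pow, mul_pow, Real.sq_sqrt (Nat.cast_nonneg _)]
        ring

end Independence

section Masking

variable {Ω : Type*} {m m₁ m₂ mΩ : MeasurableSpace Ω} {μ : Measure Ω} {A : Set Ω}

/-- What one learns by observing whether `A` occurs and, if it does, the σ-algebra `m`. -/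
@[reducible]
def maskedAlg {Ω : Type*} (m : MeasurableSpace Ω) (A : Set Ω) : MeasurableSpace Ω :=
  MeasurableSpace.generateFrom ((A ∩ ·) '' {t | MeasurableSet[m] t})

theorem measurableSet_maskedAlg_inter {t : Set Ω} (ht : MeasurableSet[m] t) :
    MeasurableSet[maskedAlg m A] (A ∩ t) :=
  MeasurableSpace.measurableSet_generateFrom ⟨t, ht, rfl⟩

theorem measurableSet_maskedAlg_self (m : MeasurableSpace Ω) (A : Set Ω) :
    MeasurableSet[maskedAlg m A] A :=
  MeasurableSpace.measurableSet_generateFrom ⟨Set.univ, .univ, Set.inter_univ A⟩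

theorem maskedAlg_le (hm : m ≤ m₁) (hA : MeasurableSet[m₁] A) : maskedAlg m A ≤ m₁ :=
  MeasurableSpace.generateFrom_le (Set.forall_mem_image.2 fun _ ht => hA.inter (hm _ ht))

theorem sup_maskedAlg_le (m m₁ : MeasurableSpace Ω) (A : Set Ω) :
    m₁ ⊔ maskedAlg m A ≤ m₁ ⊔ m ⊔ MeasurableSpace.generateFrom {A} :=
  sup_le (le_sup_left.trans le_sup_left) (maskedAlg_le (le_sup_right.trans le_sup_left)
    (le_sup_right (a := m₁ ⊔ m) A (MeasurableSpace.measurableSet_generateFrom rfl)))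

theorem comap_subtypeVal_sup_le (m m₁ : MeasurableSpace Ω) (A : Set Ω) :
    (m₁ ⊔ m ⊔ MeasurableSpace.generateFrom {A}).comap ((↑) : A → Ω)
      ≤ (m₁ ⊔ maskedAlg m A).comap (↑) := by
  rw [MeasurableSpace.comap_sup, MeasurableSpace.comap_sup]
  refine sup_le (sup_le (MeasurableSpace.comap_mono le_sup_left) ?_)
    (MeasurableSpace.comap_mono (MeasurableSpace.generateFrom_singleton_le
      (le_sup_right (a := m₁) A (measurableSet_maskedAlg_self m A))))
  rintro _ ⟨t, ht, rfl⟩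
  exact ⟨A ∩ t, le_sup_right (a := m₁) _ (measurableSet_maskedAlg_inter ht),
    Subtype.preimage_coe_self_inter A t⟩

theorem measurableSet_sup_maskedAlg_inter {t : Set Ω}
    (ht : MeasurableSet[m₁ ⊔ m ⊔ MeasurableSpace.generateFrom {A}] t) :
    MeasurableSet[m₁ ⊔ maskedAlg m A] (A ∩ t) := by
  obtain ⟨s, hs, hst⟩ := comap_subtypeVal_sup_le m m₁ A _ ⟨t, ht, rfl⟩
  rw [← Subtype.preimage_coe_eq_preimage_coe_iff.1 hst]
  exact MeasurableSet.inter (le_sup_right (a := m₁) A (measurableSet_maskedAlg_self m A)) hs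

variable [IsProbabilityMeasure μ]

-- On `A` the masked σ-algebra reveals all of `m`, and what it then gives for the conditional
-- expectation is independent of `A`: restricting the integral to `A` only costs the factor `μ A`.
theorem setIntegral_sq_condExp_sup_maskedAlg (hm₁ : m₁ ≤ m₂) (hm : m ≤ m₂) (hm₂ : m₂ ≤ mΩ)
    (hA : MeasurableSet A) (hind : Indep m₂ (MeasurableSpace.generateFrom {A}) μ) {Y : Ω → ℝ}
    (hYm : StronglyMeasurable[m₂] Y) (hY : Integrable Y μ) :
    ∫ ω in A, μ[Y | m₁ ⊔ maskedAlg m A] ω ^ 2 ∂μ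
      = μ.real A * ∫ ω, μ[Y | m₁ ⊔ m ⊔ MeasurableSpace.generateFrom {A}] ω ^ 2 ∂μ := by
  have hgen : MeasurableSpace.generateFrom {A} ≤ mΩ := MeasurableSpace.generateFrom_singleton_le hA
  have hsup : m₁ ⊔ m ⊔ MeasurableSpace.generateFrom {A} ≤ mΩ :=
    sup_le ((sup_le hm₁ hm).trans hm₂) hgen
  have hle := sup_maskedAlg_le m m₁ A
  have drop_event : μ[Y | m₁ ⊔ m ⊔ MeasurableSpace.generateFrom {A}] =ᵐ[μ] μ[Y | m₁ ⊔ m] :=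
    condExp_sup_ae_eq_of_indep (sup_le hm₁ hm) hm₂ hgen hind hYm hY
  have unmask : μ[Y | m₁ ⊔ maskedAlg m A] =ᵐ[μ.restrict A]
      μ[Y | m₁ ⊔ m ⊔ MeasurableSpace.generateFrom {A}] :=
    condExp_ae_eq_restrict_of_measurableSpace_eq_on (hle.trans hsup) hsup
      (le_sup_right (a := m₁) A (measurableSet_maskedAlg_self m A)) fun t =>
        ⟨fun h => hle _ h, fun h => by
          simpa only [Set.inter_self, ← Set.inter_assoc] using measurableSet_sup_maskedAlg_inter h⟩
  calc ∫ ω in A, μ[Y | m₁ ⊔ maskedAlg m A] ω ^ 2 ∂μ = ∫ ω in A, μ[Y | m₁ ⊔ m] ω ^ 2 ∂μ :=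
        integral_congr_ae ((unmask.trans (ae_restrict_of_ae drop_event)).fun_comp (· ^ 2))
    _ = μ.real A * ∫ ω, μ[Y | m₁ ⊔ m] ω ^ 2 ∂μ :=
        setIntegral_eq_measureReal_mul_integral_of_indep hm₂ hgen hind
          ((stronglyMeasurable_condExp.mono (sup_le hm₁ hm)).pow 2)
          (MeasurableSpace.measurableSet_generateFrom rfl)
    _ = _ := congrArg (μ.real A * ·) (integral_congr_ae (drop_event.symm.fun_comp (· ^ 2)))

theorem measureReal_mul_integral_sq_condCov_le (hm₁ : m₁ ≤ m₂) (hm : m ≤ m₂) (hm₂ : m₂ ≤ mΩ)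
    (hA : MeasurableSet A) (hind : Indep m₂ (MeasurableSpace.generateFrom {A}) μ) {X Y : Ω → ℝ}
    {R : ℝ} (hXm : StronglyMeasurable[m] X) (hXR : ∀ᵐ ω ∂μ, |X ω| ≤ R)
    (hYm : StronglyMeasurable[m₂] Y) (hY : MemLp Y ⊤ μ) :
    μ.real A * ∫ ω, condCov X Y μ (m₁ ⊔ maskedAlg m A) ω ^ 2 ∂μ
      ≤ R ^ 2 * cov[fun ω => μ[Y | m₁ ⊔ maskedAlg m A] ω ^ 2, A.indicator 1; μ] := by
  have hY2 : MemLp Y 2 μ := hY.mono_exponent le_top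
  have hsq : MemLp (fun ω => μ[Y | m₁ ⊔ maskedAlg m A] ω ^ 2) 2 μ := by
    have hE : MemLp (μ[Y | m₁ ⊔ maskedAlg m A]) ⊤ μ := hY.condExp le_top
    simpa only [sq] using! (hE.mul (r := ⊤) hE).mono_exponent le_top
  have hle : m₁ ⊔ m ⊔ MeasurableSpace.generateFrom {A} ≤ mΩ :=
    sup_le ((sup_le hm₁ hm).trans hm₂) (MeasurableSpace.generateFrom_singleton_le hA)
  rw [covariance_indicator_one hsq hA, setIntegral_sq_condExp_sup_maskedAlg hm₁ hm hm₂ hA hind hYm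
    (hY.integrable le_top), ← mul_sub, mul_left_comm]
  exact mul_le_mul_of_nonneg_left (integral_sq_condCov_le (sup_maskedAlg_le m m₁ A) hle
    (hXm.mono (le_sup_right.trans le_sup_left)) hXR hY2) measureReal_nonneg

end Masking

section MaskedFamily

variable {Ω V : Type*} {mΩ : MeasurableSpace Ω} {μ : Measure Ω} [IsProbabilityMeasure μ]
  {A : V → Set Ω} {m mY : MeasurableSpace Ω} {L : V → MeasurableSpace Ω} {g : V → Ω → ℝ} {R : ℝ}

theorem sup_iSup_maskedAlg_eq_sup_sup_maskedAlg (mY : MeasurableSpace Ω) (L : V → MeasurableSpace Ω)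
    (A : V → Set Ω) (u : V) :
    mY ⊔ ⨆ v, maskedAlg (L v) (A v)
      = (mY ⊔ ⨆ v, ⨆ (_ : v ≠ u), maskedAlg (L v) (A v)) ⊔ maskedAlg (L u) (A u) := by
  rw [sup_assoc, sup_comm (a := ⨆ v, _), ← iSup_split_single (fun v => maskedAlg (L v) (A v))]

theorem measureReal_mul_integral_sq_condCov_iSup_maskedAlg_le (hm : m ≤ mΩ) (hmY : mY ≤ m)
    (hL : ∀ v, L v ≤ m) (hA : ∀ v, MeasurableSet[mΩ] (A v)) (hind : iIndepSet A μ)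
    (hmA : Indep m (MeasurableSpace.generateFrom (Set.range A)) μ)
    (hg : ∀ v, StronglyMeasurable[L v] (g v)) (hgR : ∀ v ω, |g v ω| ≤ R) (u v : V) :
    μ.real (A u) * ∫ ω, condCov (g u) (g v) μ (mY ⊔ ⨆ w, maskedAlg (L w) (A w)) ω ^ 2 ∂μ
      ≤ R ^ 2 * cov[(A u).indicator 1,
          fun ω => μ[g v | mY ⊔ ⨆ w, maskedAlg (L w) (A w)] ω ^ 2; μ] := by
  have others_le : mY ⊔ ⨆ w, ⨆ (_ : w ≠ u), maskedAlg (L w) (A w)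
      ≤ m ⊔ MeasurableSpace.generateFrom (A '' {u}ᶜ) :=
    sup_le (hmY.trans le_sup_left) (iSup₂_le fun w hw => maskedAlg_le ((hL w).trans le_sup_left)
      (le_sup_right (a := m) _ (MeasurableSpace.measurableSet_generateFrom
        (Set.mem_image_of_mem A hw))))
  have hle : m ⊔ MeasurableSpace.generateFrom (A '' {u}ᶜ) ≤ mΩ :=
    sup_le hm (MeasurableSpace.generateFrom_le (Set.forall_mem_image.2 fun v _ => hA v))
  rw [covariance_comm, sup_iSup_maskedAlg_eq_sup_sup_maskedAlg mY L A u]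
  exact measureReal_mul_integral_sq_condCov_le others_le ((hL u).trans le_sup_left) hle (hA u)
    (indep_sup_generateFrom_image_compl hm hA hind hmA u) (hg u) (.of_forall (hgR u))
    ((hg v).mono ((hL v).trans le_sup_left))
    (memLp_top_of_bound ((hg v).mono ((hL v).trans hm)).aestronglyMeasurable R (.of_forall (hgR v)))

-- Summing the single-vertex bounds under the covariance, rather than estimating them one by one,
-- is what gains a factor `√|V|` over the trivial `|V| ^ 2`.
theorem sum_measureReal_mul_integral_sq_condCov_le [Fintype V] (hm : m ≤ mΩ) (hmY : mY ≤ m)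
    (hL : ∀ v, L v ≤ m) (hA : ∀ v, MeasurableSet[mΩ] (A v)) (hind : iIndepSet A μ)
    (hmA : Indep m (MeasurableSpace.generateFrom (Set.range A)) μ)
    (hg : ∀ v, StronglyMeasurable[L v] (g v)) (hgR : ∀ v ω, |g v ω| ≤ R) :
    ∑ u, ∑ v, μ.real (A u) *
        ∫ ω, condCov (g u) (g v) μ (mY ⊔ ⨆ w, maskedAlg (L w) (A w)) ω ^ 2 ∂μ
      ≤ R ^ 4 / 4 * (Fintype.card V * √(Fintype.card V)) := by
  set 𝓖 := mY ⊔ ⨆ w, maskedAlg (L w) (A w)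
  have hcond : ∀ᵐ ω ∂μ, ∀ v, μ[g v | 𝓖] ω ^ 2 ∈ Set.Icc 0 (R ^ 2) := by
    refine ae_all_iff.2 fun v => ?_
    filter_upwards [ae_bdd_abs_condExp_of_ae_bdd_abs (m := 𝓖) (.of_forall (hgR v))] with ω hω
    exact ⟨sq_nonneg _, sq_le_sq' (neg_le_of_abs_le hω) (le_of_abs_le hω)⟩
  have hmeas (v : V) : AEStronglyMeasurable[mΩ] (fun ω => μ[g v | 𝓖] ω ^ 2) μ :=
    (integrable_condExp (m := 𝓖) (f := g v)).aestronglyMeasurable.pow 2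
  have hsq (v : V) : MemLp (fun ω => μ[g v | 𝓖] ω ^ 2) 2 μ := .of_bound (hmeas v) (R ^ 2)
    (hcond.mono fun ω hω => (abs_of_nonneg (hω v).1).trans_le (hω v).2)
  calc ∑ u, ∑ v, μ.real (A u) * ∫ ω, condCov (g u) (g v) μ 𝓖 ω ^ 2 ∂μ
      ≤ ∑ u, ∑ v, R ^ 2 * cov[(A u).indicator 1, fun ω => μ[g v | 𝓖] ω ^ 2; μ] :=
        Finset.sum_le_sum fun u _ => Finset.sum_le_sum fun v _ =>
          measureReal_mul_integral_sq_condCov_iSup_maskedAlg_le hm hmY hL hA hind hmA hg hgR u v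
    _ = R ^ 2 * cov[∑ u, (A u).indicator 1, ∑ v, fun ω => μ[g v | 𝓖] ω ^ 2; μ] := by
        simp only [← Finset.mul_sum]
        rw [covariance_sum_sum (fun u => memLp_indicator_one (hA u) 2) hsq]
    _ ≤ R ^ 2 * (R ^ 2 / 4 * (Fintype.card V * √(Fintype.card V))) :=
        mul_le_mul_of_nonneg_left (covariance_sum_sum_indicator_le hA hind (sq_nonneg R)
          (fun v => (hmeas v).aemeasurable) hcond) (sq_nonneg R)
    _ = _ := by ring

end MaskedFamily

theorem comap_ite_some_none_eq_maskedAlg {Ω X : Type*} (h : Ω → X) (A : Set Ω) :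
    MeasurableSpace.comap (fun ω => if ω ∈ A then some (h ω) else none) ⊤
      = maskedAlg (MeasurableSpace.comap h ⊤) A := by
  refine le_antisymm ?_ (MeasurableSpace.generateFrom_le ?_)
  · rintro _ ⟨s, -, rfl⟩
    have masked (t : Set X) : MeasurableSet[maskedAlg (MeasurableSpace.comap h ⊤) A]
        (A ∩ h ⁻¹' t) := measurableSet_maskedAlg_inter ⟨t, trivial, rfl⟩
    by_cases hs : none ∈ s
    · convert (masked {x | some x ∉ s}).compl using 1
      ext ω
      by_cases hω : ω ∈ A <;> simp [hω, hs]
    · convert masked {x | some x ∈ s} using 1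
      ext ω
      by_cases hω : ω ∈ A <;> simp [hω, hs]
  · rintro _ ⟨_, ⟨s, -, rfl⟩, rfl⟩
    refine ⟨some '' s, trivial, ?_⟩
    ext ω
    by_cases hω : ω ∈ A <;> simp [hω]

namespace Model

variable {X Y' V : Type*} [Fintype X] [Fintype Y'] {Q : X → X → Y' → ℝ} {E : Set (V × V)}

/-- The event that the side information at `v` reveals the label of `v`. -/
def revealed (M : Model X Y' Q E) (ε : ℝ) (v : V) : Set M.Ω := {ω | M.U v ω ≤ ε}

/-- The labels and edge variables, jointly. Variables of pairs outside `E` are included: they are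
not observed, but they too are independent of the revelations. -/
def config (M : Model X Y' Q E) (ω : M.Ω) : (V → X) × (V × V → Y') :=
  (fun v => M.θ v ω, fun e => M.Yobs e ω)

theorem measurableSet_revealed (M : Model X Y' Q E) (ε : ℝ) (v : V) :
    MeasurableSet (M.revealed ε v) :=
  M.measU v measurableSet_Iic

theorem obsAlg_univ (M : Model X Y' Q E) (ε : ℝ) :
    M.obsAlg ε Set.univ = (⨆ e ∈ E, MeasurableSpace.comap (M.Yobs e) ⊤)
      ⊔ ⨆ v, maskedAlg (MeasurableSpace.comap (M.θ v) ⊤) (M.revealed ε v) := by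
  have comap_xi (v : V) : MeasurableSpace.comap (M.ξ ε v) ⊤
      = maskedAlg (MeasurableSpace.comap (M.θ v) ⊤) (M.revealed ε v) :=
    comap_ite_some_none_eq_maskedAlg (M.θ v) (M.revealed ε v)
  simp only [obsAlg, comap_xi, Set.mem_univ, and_true, Set.ofPred_mem_eq, iSup_pos]

theorem comap_theta_le_comap_config (M : Model X Y' Q E) (v : V) :
    MeasurableSpace.comap (M.θ v) ⊤ ≤ MeasurableSpace.comap M.config ⊤ := by
  rintro _ ⟨s, -, rfl⟩
  exact ⟨{c | c.1 v ∈ s}, trivial, rfl⟩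

theorem comap_Yobs_le_comap_config (M : Model X Y' Q E) (e : V × V) :
    MeasurableSpace.comap (M.Yobs e) ⊤ ≤ MeasurableSpace.comap M.config ⊤ := by
  rintro _ ⟨s, -, rfl⟩
  exact ⟨{c | c.2 e ∈ s}, trivial, rfl⟩

theorem obsAlg_univ_le (M : Model X Y' Q E) (ε : ℝ) : M.obsAlg ε Set.univ ≤ M.mΩ := by
  rw [obsAlg_univ]
  exact sup_le (iSup₂_le fun e _ => (M.measY e).comap_le) (iSup_le fun v =>
    maskedAlg_le (M.measθ v).comap_le (M.measurableSet_revealed ε v))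

theorem stronglyMeasurable_comp_theta (M : Model X Y' Q E) (f : X → ℝ) (v : V) :
    StronglyMeasurable[MeasurableSpace.comap (M.θ v) ⊤] (f ∘ M.θ v) := by
  let _ : MeasurableSpace X := ⊤
  exact ((measurable_from_top (f := f)).comp (comap_measurable (M.θ v))).stronglyMeasurable

theorem memLp_comp_theta (M : Model X Y' Q E) (f : X → ℝ) (v : V) :
    MemLp (f ∘ M.θ v) ⊤ M.P := by
  obtain ⟨R, hR⟩ := Finite.exists_le fun x => ‖f x‖
  exact memLp_top_of_bound
    ((M.stronglyMeasurable_comp_theta f v).mono (M.measθ v).comap_le).aestronglyMeasurable R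
    (.of_forall fun ω => hR _)

theorem measureReal_biInter_revealed (M : Model X Y' Q E) {ε : ℝ}
    (hε : ε ∈ Set.Icc (0 : ℝ) 1) (T : Finset V) :
    M.P.real (⋂ v ∈ T, M.revealed ε v) = ε ^ T.card := by
  have := M.probP
  obtain ⟨ω₀⟩ : Nonempty M.Ω := nonempty_of_isProbabilityMeasure M.P
  have h := M.lawU T (fun _ => ε) (fun _ => hε) ∅ ∅ (fun v => M.θ v ω₀) (fun e => M.Yobs e ω₀)
  simpa [revealed, measureReal_def, Set.ofPred_forall] using h

theorem measureReal_revealed (M : Model X Y' Q E) {ε : ℝ} (hε : ε ∈ Set.Icc (0 : ℝ) 1)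
    (v : V) : M.P.real (M.revealed ε v) = ε := by
  simpa only [Finset.mem_singleton, Set.iInter_iInter_eq_left, Finset.card_singleton, pow_one]
    using M.measureReal_biInter_revealed hε {v}

theorem iIndepSet_revealed (M : Model X Y' Q E) {ε : ℝ} (hε : ε ∈ Set.Icc (0 : ℝ) 1) :
    iIndepSet (M.revealed ε) M.P := by
  have := M.probP
  refine (iIndepSet_iff_meas_biInter (M.measurableSet_revealed ε)).2 fun T => ?_
  rw [← ENNReal.toReal_eq_toReal_iff' (by finiteness)
    (ENNReal.prod_ne_top fun _ _ => by finiteness), ENNReal.toReal_prod]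
  simp only [← measureReal_def, M.measureReal_biInter_revealed hε, M.measureReal_revealed hε,
    Finset.prod_const]

section Revelation

variable [Finite V]

theorem comap_config_le (M : Model X Y' Q E) : MeasurableSpace.comap M.config ⊤ ≤ M.mΩ := by
  let _ : MeasurableSpace ((V → X) × (V × V → Y')) := ⊤
  refine (measurable_to_countable' fun c => ?_).comap_le
  have fibre : M.config ⁻¹' {c} = (⋂ v, M.θ v ⁻¹' {c.1 v}) ∩ ⋂ e, M.Yobs e ⁻¹' {c.2 e} := by
    ext ω
    simp [config, Prod.ext_iff, funext_iff]
  rw [fibre]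
  exact (MeasurableSet.iInter fun v => M.measθ v trivial).inter
    (MeasurableSet.iInter fun e => M.measY e trivial)

theorem measureReal_biInter_revealed_inter_preimage_config (M : Model X Y' Q E) {ε : ℝ}
    (hε : ε ∈ Set.Icc (0 : ℝ) 1) (T : Finset V) (s : Set ((V → X) × (V × V → Y'))) :
    M.P.real ((⋂ v ∈ T, M.revealed ε v) ∩ M.config ⁻¹' s)
      = ε ^ T.card * M.P.real (M.config ⁻¹' s) := by
  have := M.probP
  have := Fintype.ofFinite V
  have measurable_fibre (c : (V → X) × (V × V → Y')) : MeasurableSet (M.config ⁻¹' {c}) :=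
    M.comap_config_le _ ⟨{c}, trivial, rfl⟩
  have fibre (c : (V → X) × (V × V → Y')) :
      M.P.real (M.config ⁻¹' {c} ∩ ⋂ v ∈ T, M.revealed ε v)
        = ε ^ T.card * M.P.real (M.config ⁻¹' {c}) := by
    have h := M.lawU T (fun _ => ε) (fun _ => hε) Finset.univ Finset.univ c.1 c.2
    rw [Finset.prod_const] at h
    convert h using 1
    · refine congrArg M.P.real (Set.ext fun ω => ?_)
      simp [config, revealed, Prod.ext_iff, funext_iff, and_comm]
    · refine congrArg (ε ^ T.card * M.P.real ·) (Set.ext fun ω => ?_)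
      simp [config, Prod.ext_iff, funext_iff]
  have hs : M.config ⁻¹' s = M.config ⁻¹' ↑s.toFinite.toFinset := by
    rw [Set.Finite.coe_toFinset]
  have hsm : MeasurableSet (M.config ⁻¹' ↑s.toFinite.toFinset) :=
    M.comap_config_le _ ⟨_, trivial, rfl⟩
  rw [hs, Set.inter_comm, ← measureReal_restrict_apply hsm,
    ← sum_measureReal_preimage_singleton _ fun c _ => measurable_fibre c,
    ← sum_measureReal_preimage_singleton _ fun c _ => measurable_fibre c, Finset.mul_sum]
  exact Finset.sum_congr rfl fun c _ =>
    (measureReal_restrict_apply (measurable_fibre c)).trans (fibre c)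

theorem indep_config_revealed (M : Model X Y' Q E) {ε : ℝ} (hε : ε ∈ Set.Icc (0 : ℝ) 1) :
    Indep (MeasurableSpace.comap M.config ⊤)
      (MeasurableSpace.generateFrom (Set.range (M.revealed ε))) M.P := by
  have := M.probP
  have hgen : MeasurableSpace.generateFrom (Set.range (M.revealed ε))
      = MeasurableSpace.generateFrom (piiUnionInter (fun v => {M.revealed ε v}) Set.univ) := by
    rw [generateFrom_piiUnionInter_singleton_left]
    simp [Set.range, eq_comm]
  refine IndepSets.indep M.comap_config_le
    (MeasurableSpace.generateFrom_le (Set.forall_mem_range.2 (M.measurableSet_revealed ε)))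
    (@MeasurableSpace.isPiSystem_measurableSet _ (.comap M.config ⊤))
    (isPiSystem_piiUnionInter _ (fun v => IsPiSystem.singleton (M.revealed ε v)) Set.univ)
    (@MeasurableSpace.generateFrom_measurableSet _ (.comap M.config ⊤)).symm hgen
    ((IndepSets_iff _ _ _).2 ?_)
  rintro _ _ ⟨s, -, rfl⟩ ⟨T, -, B, hB, rfl⟩
  rw [Set.iInter₂_congr hB, Set.inter_comm,
    ← ENNReal.toReal_eq_toReal_iff' (by finiteness) (by finiteness), ENNReal.toReal_mul]
  simp only [← measureReal_def]
  rw [M.measureReal_biInter_revealed hε, mul_comm,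
    M.measureReal_biInter_revealed_inter_preimage_config hε]

end Revelation

theorem sum_integral_sq_condCov_le [Fintype V] (M : Model X Y' Q E) {ε : ℝ}
    (hε : ε ∈ Set.Ioc (0 : ℝ) 1) {f : X → ℝ} {R : ℝ} (hR : ∀ x, |f x| ≤ R) :
    ∑ u, ∑ v, ∫ ω, condCov (f ∘ M.θ u) (f ∘ M.θ v) M.P (M.obsAlg ε Set.univ) ω ^ 2 ∂M.P
      ≤ R ^ 4 / (4 * ε) * (Fintype.card V * √(Fintype.card V)) := by
  have := M.probP
  have hε' : ε ∈ Set.Icc (0 : ℝ) 1 := ⟨hε.1.le, hε.2⟩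
  have h := sum_measureReal_mul_integral_sq_condCov_le (g := fun v => f ∘ M.θ v)
    M.comap_config_le (iSup₂_le fun e (_ : e ∈ E) => M.comap_Yobs_le_comap_config e)
    M.comap_theta_le_comap_config (M.measurableSet_revealed ε) (M.iIndepSet_revealed hε')
    (M.indep_config_revealed hε') (M.stronglyMeasurable_comp_theta f) fun v ω => hR _
  simp only [M.measureReal_revealed hε', ← Finset.mul_sum, ← obsAlg_univ] at h
  rw [← div_div, div_mul_eq_mul_div, le_div_iff₀' hε.1]
  exact h

/-- The estimator of `f(θ_u) f(θ_v)` given by the product of the posterior means of `f(θ_u)` and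
`f(θ_v)`. -/
def decoupledEstimator (M : Model X Y' Q E) (f : X → ℝ) (ε : ℝ) (ω : M.Ω) (u v : V) : ℝ :=
  M.P[fun ω' => f (M.θ u ω') | M.obsAlg ε Set.univ] ω *
    M.P[fun ω' => f (M.θ v ω') | M.obsAlg ε Set.univ] ω

/-- The estimator of `f(θ_u) f(θ_v)` given by its posterior mean, which minimizes the risk. -/
def bayesEstimator (M : Model X Y' Q E) (f : X → ℝ) (ε : ℝ) (ω : M.Ω) (u v : V) : ℝ :=
  M.P[fun ω' => f (M.θ u ω') * f (M.θ v ω') | M.obsAlg ε Set.univ] ω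

theorem memLp_mul_comp_theta (M : Model X Y' Q E) (f : X → ℝ) (u v : V) :
    MemLp (fun ω => f (M.θ u ω) * f (M.θ v ω)) 2 M.P := by
  have := M.probP
  exact ((M.memLp_comp_theta f v).mul (M.memLp_comp_theta f u)).mono_exponent le_top

theorem memLp_decoupledEstimator (M : Model X Y' Q E) (f : X → ℝ) (ε : ℝ) (u v : V) :
    MemLp (fun ω => M.decoupledEstimator f ε ω u v) 2 M.P := by
  have := M.probP
  exact (((M.memLp_comp_theta f v).condExp le_top).mul
    ((M.memLp_comp_theta f u).condExp le_top)).mono_exponent le_top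

theorem memLp_bayesEstimator (M : Model X Y' Q E) (f : X → ℝ) (ε : ℝ) (u v : V) :
    MemLp (fun ω => M.bayesEstimator f ε ω u v) 2 M.P := by
  have := M.probP
  exact (M.memLp_mul_comp_theta f u v).condExp one_le_two

theorem integral_sq_sub_decoupledEstimator (M : Model X Y' Q E) (f : X → ℝ) (ε : ℝ) (u v : V) :
    ∫ ω, (f (M.θ u ω) * f (M.θ v ω) - M.decoupledEstimator f ε ω u v) ^ 2 ∂M.P
      = ∫ ω, (f (M.θ u ω) * f (M.θ v ω) - M.bayesEstimator f ε ω u v) ^ 2 ∂M.P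
        + ∫ ω, condCov (f ∘ M.θ u) (f ∘ M.θ v) M.P (M.obsAlg ε Set.univ) ω ^ 2 ∂M.P := by
  have := M.probP
  exact integral_sq_sub_eq_add_condExp (M.obsAlg_univ_le ε) (M.memLp_mul_comp_theta f u v)
    (M.memLp_decoupledEstimator f ε u v)
    (stronglyMeasurable_condExp.mul stronglyMeasurable_condExp).aestronglyMeasurable

end Model

section Risk

variable {X Y' : Type*} [Fintype X] [Fintype Y'] {Q : X → X → Y' → ℝ}

theorem riskOf_eq_sum_integral {n : ℕ} {E : Set (Fin n × Fin n)} (M : Model X Y' Q E)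
    (f : X → ℝ) {Xh : M.Ω → Fin n → Fin n → ℝ} (hXh : ∀ u v, MemLp (fun ω => Xh ω u v) 2 M.P) :
    riskOf M f Xh = ((n : ℝ) ^ 2)⁻¹ *
      ∑ u, ∑ v, ∫ ω, (f (M.θ u ω) * f (M.θ v ω) - Xh ω u v) ^ 2 ∂M.P := by
  have hint (u v : Fin n) :
      Integrable (fun ω => (f (M.θ u ω) * f (M.θ v ω) - Xh ω u v) ^ 2) M.P :=
    ((M.memLp_mul_comp_theta f u v).sub (hXh u v)).integrable_sq
  rw [riskOf, integral_finsetSum _ fun u _ => integrable_finsetSum _ fun v _ => hint u v]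
  exact congrArg _ (Finset.sum_congr rfl fun u _ => integral_finsetSum _ fun v _ => hint u v)

theorem riskOf_decoupledEstimator_sub_riskOf_bayesEstimator {n : ℕ} {E : Set (Fin n × Fin n)}
    (M : Model X Y' Q E) (f : X → ℝ) (ε : ℝ) :
    riskOf M f (M.decoupledEstimator f ε) - riskOf M f (M.bayesEstimator f ε)
      = ((n : ℝ) ^ 2)⁻¹ * ∑ u, ∑ v,
        ∫ ω, condCov (f ∘ M.θ u) (f ∘ M.θ v) M.P (M.obsAlg ε Set.univ) ω ^ 2 ∂M.P := by
  rw [riskOf_eq_sum_integral M f (M.memLp_decoupledEstimator f ε),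
    riskOf_eq_sum_integral M f (M.memLp_bayesEstimator f ε)]
  simp only [M.integral_sq_sub_decoupledEstimator, Finset.sum_add_distrib, mul_add]
  exact add_sub_cancel_left _ _

theorem riskOf_decoupledEstimator_sub_riskOf_bayesEstimator_le {n : ℕ}
    {E : Set (Fin n × Fin n)} (M : Model X Y' Q E) {f : X → ℝ} {R ε : ℝ}
    (hε : ε ∈ Set.Ioc (0 : ℝ) 1) (hR : ∀ x, |f x| ≤ R) :
    riskOf M f (M.decoupledEstimator f ε) - riskOf M f (M.bayesEstimator f ε)
      ≤ R ^ 4 / (4 * ε) * (√(n : ℝ))⁻¹ := by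
  have h := M.sum_integral_sq_condCov_le hε hR
  rw [Fintype.card_fin] at h
  calc riskOf M f (M.decoupledEstimator f ε) - riskOf M f (M.bayesEstimator f ε)
      ≤ ((n : ℝ) ^ 2)⁻¹ * (R ^ 4 / (4 * ε) * (n * √(n : ℝ))) := by
        rw [riskOf_decoupledEstimator_sub_riskOf_bayesEstimator]
        exact mul_le_mul_of_nonneg_left h (by positivity)
    _ = R ^ 4 / (4 * ε) * (√(n : ℝ) / n) := by
        field_simp
    _ = R ^ 4 / (4 * ε) * (√(n : ℝ))⁻¹ := by rw [Real.sqrt_div_self]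

theorem statement_4_general (E : ∀ n : ℕ, Set (Fin n × Fin n)) (M : ∀ n, Model X Y' Q (E n))
    (f : X → ℝ) {ε : ℝ} (hε : ε ∈ Set.Ioc (0 : ℝ) 1) :
    Tendsto (fun n : ℕ => riskOf (M n) f ((M n).decoupledEstimator f ε)
      - riskOf (M n) f ((M n).bayesEstimator f ε)) atTop (nhds 0) := by
  obtain ⟨R, hR⟩ := Finite.exists_le fun x => |f x|
  have hlim : Tendsto (fun n : ℕ => R ^ 4 / (4 * ε) * (√(n : ℝ))⁻¹) atTop (nhds 0) := by
    simpa only [mul_zero] using! ((Real.tendsto_sqrt_atTop.comp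
      tendsto_natCast_atTop_atTop).inv_tendsto_atTop).const_mul (R ^ 4 / (4 * ε))
  refine squeeze_zero (fun n => ?_)
    (fun n => riskOf_decoupledEstimator_sub_riskOf_bayesEstimator_le (M n) hε hR) hlim
  rw [riskOf_decoupledEstimator_sub_riskOf_bayesEstimator]
  exact mul_nonneg (by positivity) (Finset.sum_nonneg fun u _ => Finset.sum_nonneg fun v _ =>
    integral_nonneg fun ω => sq_nonneg _)

end Risk

/-- Proposition: decoupling. On any sequence of finite graphs, the
decoupled estimator asymptotically achieves the Bayes risk for almost every ε. -/
theorem statement_4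
    {X Y' : Type*} [Fintype X] [Fintype Y'] [Nonempty X]
    (hcard : 2 ≤ Fintype.card X)
    (Q : X → X → Y' → ℝ)
    (hQ0 : ∀ x1 x2 y, 0 ≤ Q x1 x2 y) (hQ1 : ∀ x1 x2, ∑ y, Q x1 x2 y = 1)
    (E : ∀ n : ℕ, Set (Fin n × Fin n))
    (hloop : ∀ n, ∀ e ∈ E n, e.1 ≠ e.2)
    (hori : ∀ n (u v : Fin n), (u, v) ∈ E n → (v, u) ∉ E n)
    (M : ∀ n, Model X Y' Q (E n))
    (f : X → ℝ) :
    ∀ᵐ ε ∂(volume.restrict (Set.Ioo (0:ℝ) 1)),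
      Tendsto (fun n : ℕ =>
          riskOf (M n) f (fun ω u v =>
              ((M n).P[(fun ω' => f ((M n).θ u ω')) | (M n).obsAlg ε Set.univ]) ω *
                ((M n).P[(fun ω' => f ((M n).θ v ω')) | (M n).obsAlg ε Set.univ]) ω)
          - riskOf (M n) f (fun ω u v =>
              ((M n).P[(fun ω' => f ((M n).θ u ω') * f ((M n).θ v ω'))
                | (M n).obsAlg ε Set.univ]) ω))
        atTop (nhds 0) := by
  exact (ae_restrict_iff' measurableSet_Ioo).2
    (.of_forall fun ε hε => statement_4_general E M f (Set.Ioo_subset_Ioc_self hε))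

end
end

section
/- There exists a constant c₀ = c₀(|X|,|Y|) > 0 such that for all n with nk even: P( θ₀ ∈ Θ(η_n; G_n, Y) ) ≥ 1 − c₀⁻¹ exp(−c₀ (log n)²), where G_n is a uniformly random simple k-regular graph on n vertices and (θ₀, Y) are generated by the observation model on G_n. -/
open MeasureTheory ProbabilityTheory Filter
open scoped ENNReal Classical

noncomputable section

/-- `g` is the adjacency function of a simple `k`-regular graph on `Fin n`. -/
def IsRegAdj (n k : ℕ) (g : Fin n → Fin n → Bool) : Prop :=
  (∀ u v, g u v = g v u) ∧ (∀ u, g u u = false) ∧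
    ∀ u, (Finset.univ.filter fun v => g u v = true).card = k

/-- The edges of such a graph, each with its canonical orientation. -/
def edgesOf {n : ℕ} (g : Fin n → Fin n → Bool) : Finset (Fin n × Fin n) :=
  Finset.univ.filter fun e => e.1 < e.2 ∧ g e.1 e.2 = true

/-- A probability space carrying a random graph on `n` vertices, labels, edge
observations and auxiliary uniform random variables for the side information. -/
structure RegSpace (X Y' : Type*) (n : ℕ) where
  Ω : Type
  mΩ : MeasurableSpace Ω
  P : @Measure Ω mΩ
  θ0 : Ω → Fin n → X
  G : Ω → Fin n → Fin n → Bool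
  Yobs : Fin n × Fin n → Ω → Y'
  U : Ω → Fin n → ℝ

attribute [instance] RegSpace.mΩ

/-- `M` carries the observation model with kernel `Q` on a uniformly random simple
`k`-regular graph on `n` (labelled) vertices: the graph is uniform among `k`-regular
graphs, the labels are i.i.d. uniform and independent of the graph, and conditionally
on graph and labels the edge observations are independent with law `Q(·|θ_u,θ_v)`. -/
def RegSpace.IsRegModel {X Y' : Type*} [Fintype X] [Fintype Y'] (Q : X → X → Y' → ℝ)
    (k : ℕ) {n : ℕ} (M : RegSpace X Y' n) : Prop :=
  IsProbabilityMeasure M.P ∧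
  (∀ v, @Measurable _ _ M.mΩ ⊤ (fun ω => M.θ0 ω v)) ∧
  (@Measurable _ _ M.mΩ ⊤ M.G) ∧
  (∀ e, @Measurable _ _ M.mΩ ⊤ (M.Yobs e)) ∧
  (∀ v, @Measurable _ _ M.mΩ inferInstance (fun ω => M.U ω v)) ∧
  (M.P {ω | IsRegAdj n k (M.G ω)} = 1) ∧
  (∀ g : Fin n → Fin n → Bool, IsRegAdj n k g →
    ∀ (σ : Fin n → X) (F : Finset (Fin n × Fin n)), (∀ e ∈ F, e ∈ edgesOf g) →
    ∀ y : Fin n × Fin n → Y',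
      (M.P {ω | M.G ω = g ∧ M.θ0 ω = σ ∧ ∀ e ∈ F, M.Yobs e ω = y e}).toReal
        = (Nat.card {g' : Fin n → Fin n → Bool // IsRegAdj n k g'} : ℝ)⁻¹ *
          ((Fintype.card X : ℝ)⁻¹) ^ n * ∏ e ∈ F, Q (σ e.1) (σ e.2) (y e))

/-- The auxiliary variables `U` are i.i.d. uniform on [0,1] and independent of
everything else. -/
def RegSpace.HasUniformSide {X Y' : Type*} {n : ℕ} (M : RegSpace X Y' n) : Prop :=
  ∀ (T : Finset (Fin n)) (a : Fin n → ℝ), (∀ v, a v ∈ Set.Icc (0:ℝ) 1) →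
    ∀ A : Set ((Fin n → X) × (Fin n → Fin n → Bool) × (Fin n × Fin n → Y')),
      (M.P {ω | (∀ v ∈ T, M.U ω v ≤ a v) ∧
          (M.θ0 ω, M.G ω, fun e => M.Yobs e ω) ∈ A}).toReal
        = (∏ v ∈ T, a v) *
          (M.P {ω | (M.θ0 ω, M.G ω, fun e => M.Yobs e ω) ∈ A}).toReal

variable {X Y' : Type*}

/-- Edge empirical distribution of a configuration and observations. -/
def empEdge [Fintype X] [Fintype Y'] {n : ℕ} (g : Fin n → Fin n → Bool) (θ : Fin n → X)
    (y : Fin n × Fin n → Y') (x1 x2 : X) (b : Y') : ℝ :=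
  ((edgesOf g).card : ℝ)⁻¹ *
    (((edgesOf g).filter fun e => θ e.1 = x1 ∧ θ e.2 = x2 ∧ y e = b).card : ℝ)

/-- The reference edge distribution ν̄_e(x₁,x₂,y) = ν̄(x₁)ν̄(x₂)Q(y|x₁,x₂). -/
def nuBarE [Fintype X] (Q : X → X → Y' → ℝ) (x1 x2 : X) (b : Y') : ℝ :=
  (Fintype.card X : ℝ)⁻¹ * (Fintype.card X : ℝ)⁻¹ * Q x1 x2 b

/-- Total variation distance between the edge empirical distribution and ν̄_e. -/
def dTVedge [Fintype X] [Fintype Y'] {n : ℕ} (Q : X → X → Y' → ℝ)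
    (g : Fin n → Fin n → Bool) (θ : Fin n → X) (y : Fin n × Fin n → Y') : ℝ :=
  (2:ℝ)⁻¹ * ∑ x1, ∑ x2, ∑ b, |empEdge g θ y x1 x2 b - nuBarE Q x1 x2 b|

/-- η_n = (log n)/√n. -/
def ηseq (n : ℕ) : ℝ := Real.log n / Real.sqrt n

/-- The typical set Θ(η;G,Y). -/
def typicalSet [Fintype X] [Fintype Y'] {n : ℕ} (Q : X → X → Y' → ℝ) (η : ℝ)
    (g : Fin n → Fin n → Bool) (y : Fin n × Fin n → Y') : Set (Fin n → X) :=
  {θ | dTVedge Q g θ y ≤ η}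

/-- Joint vertex empirical distribution of two configurations. -/
def empVert [Fintype X] {n : ℕ} (a b : Fin n → X) (x1 x2 : X) : ℝ :=
  (n : ℝ)⁻¹ * ((Finset.univ.filter fun u => a u = x1 ∧ b u = x2).card : ℝ)

/-- Total variation distance between the joint vertex empirical distribution and
ν̄ × ν̄. -/
def dTVvert [Fintype X] {n : ℕ} (a b : Fin n → X) : ℝ :=
  (2:ℝ)⁻¹ * ∑ x1, ∑ x2,
    |empVert a b x1 x2 - (Fintype.card X : ℝ)⁻¹ * (Fintype.card X : ℝ)⁻¹|

/-- The σ-algebra generated by the graph and the edge observations. -/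
def RegSpace.obsAlg {n : ℕ} (M : RegSpace X Y' n) : MeasurableSpace M.Ω :=
  MeasurableSpace.comap
    (fun ω => (M.G ω,
      fun e => if e ∈ edgesOf (M.G ω) then some (M.Yobs e ω) else none)) ⊤

/-- An admissible estimator: a function of (G,Y) outputting a typical configuration
whenever one exists. -/
def IsTypEstimator [Fintype X] [Fintype Y'] (Q : X → X → Y' → ℝ) {n : ℕ}
    (M : RegSpace X Y' n) (θhat : M.Ω → Fin n → X) : Prop :=
  (@Measurable _ _ M.obsAlg ⊤ θhat) ∧
  ∀ ω, (typicalSet Q (ηseq n) (M.G ω) (fun e => M.Yobs e ω)).Nonempty →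
    θhat ω ∈ typicalSet Q (ηseq n) (M.G ω) (fun e => M.Yobs e ω)

/-!
Fix a `k`-regular graph and a triple `z` of two labels and an observation. The number of edges
carrying `z` is sub-Gaussian around its mean with variance proxy of order `n k ^ 2`: given the
labels it is a sum of independent indicators, and its conditional mean is a function of the `n`
independent labels which changes by at most `k` when one label is changed, so that McDiarmid's
inequality applies to both parts and the variance proxies add up. If the total variation distance
exceeds `η`, then one of the finitely many triples deviates by a constant multiple of `η n k`, so
`η = log n / √n` and a union bound give `exp (-c (log n) ^ 2)`, uniformly in the graph. Averaging
over the random graph preserves the bound.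
-/

open scoped NNReal

section Concentration

variable {Ω : Type*} [MeasurableSpace Ω] {μ : Measure Ω} {c c' : ℝ≥0}

lemma measureReal_le_abs_le_of_hasSubgaussianMGF [IsFiniteMeasure μ] {f : Ω → ℝ}
    (h : HasSubgaussianMGF f c μ) {ε : ℝ} (hε : 0 ≤ ε) :
    μ.real {ω | ε ≤ |f ω|} ≤ 2 * Real.exp (-ε ^ 2 / (2 * c)) := by
  have hsub : {ω | ε ≤ |f ω|} = {ω | ε ≤ f ω} ∪ {ω | ε ≤ (-f) ω} :=
    Set.ext fun ω => le_abs (a := ε) (b := f ω)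
  calc μ.real {ω | ε ≤ |f ω|} ≤ μ.real {ω | ε ≤ f ω} + μ.real {ω | ε ≤ (-f) ω} :=
        hsub ▸ measureReal_union_le _ _
    _ ≤ Real.exp (-ε ^ 2 / (2 * c)) + Real.exp (-ε ^ 2 / (2 * c)) :=
        add_le_add (h.measure_ge_le hε) (h.neg.measure_ge_le hε)
    _ = 2 * Real.exp (-ε ^ 2 / (2 * c)) := (two_mul _).symm

lemma hasSubgaussianMGF_sub_integral_of_abs_sub_le [IsProbabilityMeasure μ] {f : Ω → ℝ}
    (hf : Measurable f) (hc : ∀ x y, |f x - f y| ≤ c) :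
    HasSubgaussianMGF (fun x => f x - μ[f]) ((c / 2) ^ 2) μ := by
  obtain ⟨x₀⟩ := nonempty_of_isProbabilityMeasure μ
  have hbdd : BddBelow (Set.range f) :=
    ⟨f x₀ - c, by rintro _ ⟨x, rfl⟩; linarith [le_of_abs_le (hc x₀ x)]⟩
  have : Nonempty Ω := ⟨x₀⟩
  have hmem : ∀ x, f x ∈ Set.Icc (⨅ y, f y) ((⨅ y, f y) + c) := fun x =>
    ⟨ciInf_le hbdd x, sub_le_iff_le_add.mp (le_ciInf fun y => by linarith [le_of_abs_le (hc x y)])⟩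
  simpa using hasSubgaussianMGF_of_mem_Icc hf.aemeasurable (ae_of_all μ hmem)

lemma hasSubgaussianMGF_add_compProd {Ω' : Type*} [MeasurableSpace Ω'] [IsFiniteMeasure μ]
    {κ : Kernel Ω Ω'} [IsMarkovKernel κ] {f : Ω → ℝ} {g : Ω × Ω' → ℝ}
    (hf : HasSubgaussianMGF f c μ) (hg : Measurable g)
    (hgκ : ∀ x, HasSubgaussianMGF (fun y => g (x, y)) c' (κ x)) :
    HasSubgaussianMGF (fun p => f p.1 + g p) (c + c') (μ ⊗ₘ κ) := by
  have hsplit (t : ℝ) (x : Ω) (y : Ω') : Real.exp (t * (f x + g (x, y))) =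
      Real.exp (t * f x) * Real.exp (t * g (x, y)) := by rw [mul_add, Real.exp_add]
  have hfst : AEMeasurable (fun p : Ω × Ω' => f p.1) (μ ⊗ₘ κ) :=
    AEMeasurable.comp_measurable (f := Prod.fst)
      (by rw [← Measure.fst, Measure.fst_compProd]; exact hf.aemeasurable) measurable_fst
  have hmeas (t : ℝ) : AEStronglyMeasurable (fun p : Ω × Ω' => Real.exp (t * (f p.1 + g p)))
      (μ ⊗ₘ κ) :=
    (Real.measurable_exp.comp_aemeasurable
      ((hfst.add hg.aemeasurable).const_mul t)).aestronglyMeasurable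
  have hfiber (t : ℝ) (x : Ω) : ∫ y, Real.exp (t * (f x + g (x, y))) ∂κ x ≤
      Real.exp (t * f x) * Real.exp (c' * t ^ 2 / 2) := by
    simp only [hsplit, integral_const_mul]
    gcongr
    exact (hgκ x).mgf_le t
  have hint (t : ℝ) : Integrable (fun p => Real.exp (t * (f p.1 + g p))) (μ ⊗ₘ κ) := by
    refine (Measure.integrable_compProd_iff (hmeas t)).mpr ⟨ae_of_all _ fun x => ?_, ?_⟩
    · simp only [hsplit]
      exact ((hgκ x).integrable_exp_mul t).const_mul _
    · refine ((hf.integrable_exp_mul t).mul_const (Real.exp (c' * t ^ 2 / 2))).mono'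
        (hmeas t).norm.integral_kernel_compProd (ae_of_all _ fun x => ?_)
      simp only [Real.norm_eq_abs, Real.abs_exp]
      rw [abs_of_nonneg (integral_nonneg fun _ => (Real.exp_pos _).le)]
      exact hfiber t x
  refine ⟨hint, fun t => ?_⟩
  calc mgf (fun p => f p.1 + g p) (μ ⊗ₘ κ) t
      = ∫ x, ∫ y, Real.exp (t * (f x + g (x, y))) ∂κ x ∂μ := Measure.integral_compProd (hint t)
    _ ≤ ∫ x, Real.exp (t * f x) * Real.exp (c' * t ^ 2 / 2) ∂μ :=
        integral_mono (hint t).integral_compProd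
          ((hf.integrable_exp_mul t).mul_const _) (hfiber t)
    _ = mgf f μ t * Real.exp (c' * t ^ 2 / 2) := integral_mul_const _ _
    _ ≤ Real.exp (c * t ^ 2 / 2) * Real.exp (c' * t ^ 2 / 2) := by
        gcongr
        exact hf.mgf_le t
    _ = Real.exp ((c + c' : ℝ≥0) * t ^ 2 / 2) := by
        rw [← Real.exp_add]
        push_cast
        ring_nf

lemma hasSubgaussianMGF_sub_integral_prod {Ω' : Type*} [MeasurableSpace Ω'] {ν : Measure Ω'}
    [IsProbabilityMeasure μ] [IsProbabilityMeasure ν] {f : Ω × Ω' → ℝ} (hf : Measurable f)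
    (hc : ∀ x x' y, |f (x, y) - f (x', y)| ≤ c)
    (hfν : ∀ x, HasSubgaussianMGF (fun y => f (x, y) - ∫ y, f (x, y) ∂ν) c' ν) :
    HasSubgaussianMGF (fun p => f p - (μ.prod ν)[f]) ((c / 2) ^ 2 + c') (μ.prod ν) := by
  let h : Ω → ℝ := fun x => ∫ y, f (x, y) ∂ν
  have hint (x : Ω) : Integrable (fun y => f (x, y)) ν :=
    ((hfν x).integrable.add (integrable_const (h x))).congr
      (ae_of_all _ fun y => sub_add_cancel (f (x, y)) (h x))
  have hmeas : Measurable h := hf.stronglyMeasurable.integral_prod_right'.measurable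
  have hhead : HasSubgaussianMGF (fun x => h x - μ[h]) ((c / 2) ^ 2) μ := by
    refine hasSubgaussianMGF_sub_integral_of_abs_sub_le hmeas fun x x' => ?_
    rw [← integral_sub (hint x) (hint x')]
    have hdiff (y : Ω') : ‖f (x, y) - f (x', y)‖ ≤ c := hc x x' y
    simpa using norm_integral_le_of_norm_le_const (ae_of_all ν hdiff)
  have hprod : HasSubgaussianMGF (fun p => f p - μ[h]) ((c / 2) ^ 2 + c') (μ.prod ν) := by
    rw [← Measure.compProd_const]
    refine (hasSubgaussianMGF_add_compProd (κ := Kernel.const _ ν) hhead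
      (g := fun p => f p - h p.1) (hf.sub (hmeas.comp measurable_fst)) hfν).congr
      (ae_of_all _ fun p => ?_)
    ring
  have hint' : Integrable f (μ.prod ν) :=
    (hprod.integrable.add (integrable_const μ[h])).congr
      (ae_of_all _ fun p => sub_add_cancel (f p) _)
  rwa [integral_prod f hint']

/-- The bounded differences property: changing the `i`-th argument of `f` moves its value by at
most `c i`. -/
def HasBoundedDifferences {ι : Type*} [DecidableEq ι] {E : ι → Type*} (f : (∀ i, E i) → ℝ)
    (c : ι → ℝ≥0) : Prop :=
  ∀ x i y, |f (Function.update x i y) - f x| ≤ c i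

lemma hasSubgaussianMGF_of_hasBoundedDifferences_fin {n : ℕ} {E : Fin n → Type*}
    [∀ i, MeasurableSpace (E i)] (μ : ∀ i, Measure (E i)) [∀ i, IsProbabilityMeasure (μ i)]
    {f : (∀ i, E i) → ℝ} (hf : Measurable f) {c : Fin n → ℝ≥0} (hc : HasBoundedDifferences f c) :
    HasSubgaussianMGF (fun x => f x - (Measure.pi μ)[f]) (∑ i, (c i / 2) ^ 2) (Measure.pi μ) := by
  induction n with
  | zero => simp [Subsingleton.elim (α := ∀ i : Fin 0, E i) _ default, integral_unique]
  | succ n ih =>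
    let ν := Measure.pi fun i : Fin n => μ i.succ
    let Φ : (∀ i, E i) ≃ᵐ E 0 × ∀ i : Fin n, E i.succ := MeasurableEquiv.piFinSuccAbove E 0
    let F : (E 0 × ∀ i : Fin n, E i.succ) → ℝ := fun p => f (Fin.cons p.1 p.2)
    have hΦ : MeasurePreserving Φ (Measure.pi μ) ((μ 0).prod ν) :=
      measurePreserving_piFinSuccAbove μ 0
    have hFΦ (x : ∀ i, E i) : F (Φ x) = f x := congrArg f (Fin.cons_self_tail x)
    have hF : Measurable F := by
      have heq : F = f ∘ Φ.symm := funext fun p => by simpa using hFΦ (Φ.symm p)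
      exact heq ▸ hf.comp Φ.symm.measurable
    have hhead (x x' : E 0) (τ : ∀ i : Fin n, E i.succ) : |F (x, τ) - F (x', τ)| ≤ c 0 := by
      simpa only [Fin.update_cons_zero] using hc (Fin.cons x' τ) 0 x
    have htail (x : E 0) : HasBoundedDifferences (fun τ => F (x, τ)) fun i => c i.succ :=
      fun τ i y => by simpa only [F, Fin.cons_update] using hc (Fin.cons x τ) i.succ y
    have hprod := hasSubgaussianMGF_sub_integral_prod (μ := μ 0) hF hhead fun x =>
      ih (fun i => μ i.succ) (hF.comp measurable_prodMk_left) (htail x)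
    rw [← hΦ.map_eq] at hprod
    simpa only [Function.comp_def, hFΦ, hΦ.map_eq, ← hΦ.integral_comp', Fin.sum_univ_succ] using
      HasSubgaussianMGF.of_map Φ.measurable.aemeasurable hprod

theorem hasSubgaussianMGF_of_hasBoundedDifferences {ι : Type*} [Fintype ι] [DecidableEq ι]
    {E : ι → Type*} [∀ i, MeasurableSpace (E i)] (μ : ∀ i, Measure (E i))
    [∀ i, IsProbabilityMeasure (μ i)] {f : (∀ i, E i) → ℝ} (hf : Measurable f) {c : ι → ℝ≥0}
    (hc : HasBoundedDifferences f c) :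
    HasSubgaussianMGF (fun x => f x - (Measure.pi μ)[f]) (∑ i, (c i / 2) ^ 2) (Measure.pi μ) := by
  let e := (Fintype.equivFin ι).symm
  let Φ := MeasurableEquiv.piCongrLeft E e
  have hΦ : MeasurePreserving Φ (Measure.pi fun j => μ (e j)) (Measure.pi μ) :=
    measurePreserving_piCongrLeft μ e
  have hΦ_update (x : ∀ j, E (e j)) (j y) :
      Φ (Function.update x j y) = Function.update (Φ x) (e j) y := by
    have happly (x : ∀ j, E (e j)) (j) : Φ x (e j) = x j := Equiv.piCongrLeft_apply_apply E e x j
    ext i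
    obtain ⟨i, rfl⟩ := e.surjective i
    rcases eq_or_ne i j with rfl | hij
    · simp [happly]
    · simp [happly, hij]
  have hfΦ : HasBoundedDifferences (f ∘ Φ) (c ∘ e) := fun x j y => by
    simpa only [Function.comp_apply, hΦ_update] using hc (Φ x) (e j) y
  have hfin := hasSubgaussianMGF_of_hasBoundedDifferences_fin (fun j => μ (e j))
    (hf.comp Φ.measurable) hfΦ
  rw [← hΦ.symm.map_eq] at hfin
  have := HasSubgaussianMGF.of_map Φ.symm.measurable.aemeasurable hfin
  simpa [Function.comp_def, hΦ.symm.map_eq, hΦ.integral_comp',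
    e.sum_comp fun i => (c i / 2) ^ 2] using this

end Concentration

section PiKernel

variable {ι α : Type*} [Fintype ι] [MeasurableSpace α] {F : ι → Type*} [∀ i, MeasurableSpace (F i)]

/-- The product of finitely many Markov kernels: `a` is sent to the law of independent random
variables with laws `κ i a`. -/
def piKernel (κ : ∀ i, Kernel α (F i)) [∀ i, IsMarkovKernel (κ i)] : Kernel α (∀ i, F i) where
  toFun a := Measure.pi fun i => κ i a
  measurable' := by
    refine Measurable.measure_of_isPiSystem_of_isProbabilityMeasure generateFrom_pi.symm
      isPiSystem_pi ?_
    rintro _ ⟨s, hs, rfl⟩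
    simp only [Measure.pi_pi]
    exact Finset.measurable_prod _ fun i _ => (κ i).measurable_coe (hs i (Set.mem_univ i))

lemma piKernel_apply (κ : ∀ i, Kernel α (F i)) [∀ i, IsMarkovKernel (κ i)] (a : α) :
    piKernel κ a = Measure.pi fun i => κ i a := rfl

instance (κ : ∀ i, Kernel α (F i)) [∀ i, IsMarkovKernel (κ i)] : IsMarkovKernel (piKernel κ) :=
  ⟨fun a => by rw [piKernel_apply]; infer_instance⟩

lemma measurePreserving_eval_pair (μ : ∀ i, Measure (F i)) [∀ i, IsProbabilityMeasure (μ i)]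
    {i j : ι} (hij : i ≠ j) :
    MeasurePreserving (fun x : ∀ i, F i => (x i, x j)) (Measure.pi μ) ((μ i).prod (μ j)) := by
  have hind : IndepFun (fun x : ∀ i, F i => x i) (fun x => x j) (Measure.pi μ) :=
    (iIndepFun_pi (X := fun _ => id) fun _ => aemeasurable_id).indepFun hij
  refine ⟨by fun_prop, ?_⟩
  rw [(indepFun_iff_map_prod_eq_prod_map_map (measurable_pi_apply i).aemeasurable
    (measurable_pi_apply j).aemeasurable).mp hind,
    (measurePreserving_eval μ i).map_eq, (measurePreserving_eval μ j).map_eq]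

end PiKernel

section DiscreteLaws

variable {α β : Type*} [MeasurableSpace α]

lemma measureReal_le_of_forall_inter_preimage_singleton_le {μ : Measure α}
    [IsProbabilityMeasure μ] [Finite β] {f : α → β} (hf : ∀ b, MeasurableSet (f ⁻¹' {b}))
    {s : Set α} {ε : ℝ} (h : ∀ b, μ.real (s ∩ f ⁻¹' {b}) ≤ μ.real (f ⁻¹' {b}) * ε) :
    μ.real s ≤ ε := by
  have := Fintype.ofFinite β
  have hcover : s = ⋃ b, s ∩ f ⁻¹' {b} := by
    rw [← Set.inter_iUnion, ← Set.preimage_iUnion, Set.iUnion_of_singleton, Set.preimage_univ,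
      Set.inter_univ]
  calc μ.real s ≤ ∑ b, μ.real (s ∩ f ⁻¹' {b}) := by
        conv_lhs => rw [hcover]
        exact measureReal_iUnion_fintype_le _
    _ ≤ ∑ b, μ.real (f ⁻¹' {b}) * ε := Finset.sum_le_sum fun b _ => h b
    _ = ε := by
        rw [← Finset.sum_mul, sum_measureReal_preimage_singleton _ fun b _ => hf b]
        simp

variable [MeasurableSpace β]

lemma exists_isMarkovKernel_real_singleton_eq [Countable α] [MeasurableSingletonClass α]
    [Fintype β] [MeasurableSingletonClass β] {q : α → β → ℝ} (hq : ∀ a b, 0 ≤ q a b)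
    (hsum : ∀ a, ∑ b, q a b = 1) :
    ∃ κ : Kernel α β, IsMarkovKernel κ ∧ ∀ a b, (κ a).real {b} = q a b := by
  have hone (a : α) : ∑ b, ENNReal.ofReal (q a b) = 1 := by
    rw [← ENNReal.ofReal_sum_of_nonneg fun b _ => hq a b, hsum, ENNReal.ofReal_one]
  let p (a : α) : PMF β := PMF.ofFintype _ (hone a)
  refine ⟨Kernel.ofFunOfCountable fun a => (p a).toMeasure,
    ⟨fun a => PMF.toMeasure.isProbabilityMeasure (p a)⟩, fun a b => ?_⟩
  change ((p a).toMeasure {b}).toReal = q a b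
  rw [PMF.toMeasure_apply_singleton _ _ (measurableSet_singleton b), PMF.ofFintype_apply,
    ENNReal.toReal_ofReal (hq a b)]

lemma uniformOn_univ_real_singleton [Fintype α] [MeasurableSingletonClass α] (a : α) :
    (uniformOn (Set.univ : Set α)).real {a} = (Fintype.card α : ℝ)⁻¹ := by
  simp [measureReal_def, uniformOn_univ]

lemma measureReal_compProd_singleton [MeasurableSingletonClass α] [MeasurableSingletonClass β]
    (μ : Measure α) [SFinite μ] (κ : Kernel α β) [IsSFiniteKernel κ] (a : α) (b : β) :
    (μ ⊗ₘ κ).real {(a, b)} = μ.real {a} * (κ a).real {b} := by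
  rw [measureReal_def, ← Set.singleton_prod_singleton, Measure.compProd_apply_prod
    (measurableSet_singleton a) (measurableSet_singleton b), lintegral_singleton,
    ENNReal.toReal_mul, mul_comm, measureReal_def, measureReal_def]

end DiscreteLaws

section EdgeModel

lemma hasBoundedDifferences_sum {ι E : Type*} [Fintype E] [DecidableEq ι] {F : ι → Type*}
    {f : E → (∀ i, F i) → ℝ} (S : E → Finset ι) (hf : ∀ e x, f e x ∈ Set.Icc 0 1)
    (hS : ∀ e i, i ∉ S e → ∀ x y, f e (Function.update x i y) = f e x) :
    HasBoundedDifferences (fun x => ∑ e, f e x)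
      fun i => (Finset.univ.filter fun e => i ∈ S e).card := by
  intro x i y
  have hterm (e : E) : |f e (Function.update x i y) - f e x| ≤ if i ∈ S e then 1 else 0 := by
    split_ifs with hi
    · exact abs_sub_le_of_nonneg_of_le (hf e _).1 (hf e _).2 (hf e x).1 (hf e x).2
    · simp [hS e i hi]
  calc |∑ e, f e (Function.update x i y) - ∑ e, f e x|
      ≤ ∑ e, |f e (Function.update x i y) - f e x| := by
        rw [← Finset.sum_sub_distrib]
        exact Finset.abs_sum_le_sum_abs _ _
    _ ≤ ∑ e, if i ∈ S e then 1 else 0 := Finset.sum_le_sum fun e _ => hterm e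
    _ = _ := by simp

variable {V E : Type*} [Fintype E] [MeasurableSpace X] [MeasurableSpace Y']
  (ν : Measure X) [IsProbabilityMeasure ν] (W : Kernel (X × X) Y') [IsMarkovKernel W]
  (ends : E → V × V)

/-- The number of edges with endpoint `v`, for edges indexed by `E` with endpoints `ends e`. -/
def endDegree [DecidableEq V] (ends : E → V × V) (v : V) : ℕ :=
  (Finset.univ.filter fun e => v ∈ ({(ends e).1, (ends e).2} : Finset V)).card

lemma sum_endDegree [Fintype V] [DecidableEq V] (hloop : ∀ e, (ends e).1 ≠ (ends e).2) :
    ∑ v, endDegree ends v = 2 * Fintype.card E := by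
  calc ∑ v, endDegree ends v
      = ∑ e, (Finset.univ.filter (· ∈ ({(ends e).1, (ends e).2} : Finset V))).card :=
        Finset.sum_card_bipartiteAbove_eq_sum_card_bipartiteBelow _
    _ = ∑ _ : E, 2 := Finset.sum_congr rfl fun e _ => by
        rw [Finset.filter_univ_mem, Finset.card_pair (hloop e)]
    _ = 2 * Fintype.card E := by simp [mul_comm]

/-- The conditional law of the edge observations given the labels: independent with law
`W (θ u, θ v)` on an edge `(u, v)`. -/
def edgeKernel : Kernel (V → X) (E → Y') :=
  piKernel fun e => W.comap (fun θ : V → X => (θ (ends e).1, θ (ends e).2)) (by fun_prop)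

lemma edgeKernel_apply (θ : V → X) :
    edgeKernel W ends θ = Measure.pi fun e => W (θ (ends e).1, θ (ends e).2) := rfl

instance : IsMarkovKernel (edgeKernel W ends) := by unfold edgeKernel; infer_instance

/-- The sum of a function of the two end labels and the observation over all edges. -/
def edgeSum (ends : E → V × V) (φ : (X × X) × Y' → ℝ)
    (p : (V → X) × (E → Y')) : ℝ :=
  ∑ e, φ ((p.1 (ends e).1, p.1 (ends e).2), p.2 e)

lemma measurable_edgeSum {φ : (X × X) × Y' → ℝ} (hφ : Measurable φ) :
    Measurable (edgeSum ends φ) :=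
  Finset.measurable_sum _ fun e _ => hφ.comp (by fun_prop)

lemma hasSubgaussianMGF_edgeSum_edgeKernel {φ : (X × X) × Y' → ℝ} (hφ : Measurable φ)
    (hφ01 : ∀ z, φ z ∈ Set.Icc 0 1) (θ : V → X) :
    HasSubgaussianMGF (fun y => edgeSum ends φ (θ, y) -
        ∑ e, ∫ b, φ ((θ (ends e).1, θ (ends e).2), b) ∂W (θ (ends e).1, θ (ends e).2))
      (Fintype.card E * (1 / 2) ^ 2) (edgeKernel W ends θ) := by
  let x : E → X × X := fun e => (θ (ends e).1, θ (ends e).2)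
  have hmeas (e : E) : Measurable fun b => φ (x e, b) := hφ.comp measurable_prodMk_left
  have hbdd : HasBoundedDifferences (fun y : E → Y' => edgeSum ends φ (θ, y)) fun _ => 1 := by
    have := hasBoundedDifferences_sum (f := fun e (y : E → Y') => φ (x e, y e)) (fun e => {e})
      (fun e y => hφ01 _) fun e i hi y b => by
        rw [Function.update_of_ne (Finset.notMem_singleton.mp hi).symm]
    simpa [Finset.filter_eq, edgeSum] using this
  have hint (e : E) : Integrable (fun b => φ (x e, b)) (W (x e)) :=
    .of_mem_Icc 0 1 (hmeas e).aemeasurable (ae_of_all _ fun b => hφ01 _)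
  have hmean : ∫ y, edgeSum ends φ (θ, y) ∂(Measure.pi fun e => W (x e)) =
      ∑ e, ∫ b, φ (x e, b) ∂W (x e) :=
    calc ∫ y, edgeSum ends φ (θ, y) ∂(Measure.pi fun e => W (x e))
        = ∑ e, ∫ y, φ (x e, y e) ∂(Measure.pi fun e => W (x e)) :=
          integral_finsetSum _ fun e _ => integrable_comp_eval (μ := fun e => W (x e)) (hint e)
      _ = ∑ e, ∫ b, φ (x e, b) ∂W (x e) := Finset.sum_congr rfl fun e _ =>
          integral_comp_eval (μ := fun e => W (x e)) (hmeas e).aestronglyMeasurable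
  rw [edgeKernel_apply, ← hmean]
  simpa using hasSubgaussianMGF_of_hasBoundedDifferences (fun e => W (x e))
    ((measurable_edgeSum ends hφ).comp measurable_prodMk_left) hbdd

variable [Fintype V]

/-- The joint law of the labels and the edge observations on the graph with edges `ends e`. -/
def obsLaw : Measure ((V → X) × (E → Y')) := (Measure.pi fun _ => ν) ⊗ₘ edgeKernel W ends

instance : IsProbabilityMeasure (obsLaw ν W ends) := by unfold obsLaw; infer_instance

lemma measureReal_obsLaw_singleton [MeasurableSingletonClass X] [MeasurableSingletonClass Y']
    (σ : V → X) (y : E → Y') :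
    (obsLaw ν W ends).real {(σ, y)} =
      (∏ v, ν.real {σ v}) * ∏ e, (W (σ (ends e).1, σ (ends e).2)).real {y e} := by
  rw [obsLaw, measureReal_compProd_singleton, edgeKernel_apply]
  simp only [measureReal_def, Measure.pi_singleton, ENNReal.toReal_prod]

lemma hasSubgaussianMGF_sum_ends [DecidableEq V] {ψ : X × X → ℝ} (hψ : Measurable ψ)
    (hψ01 : ∀ x, ψ x ∈ Set.Icc 0 1) (hloop : ∀ e, (ends e).1 ≠ (ends e).2) :
    HasSubgaussianMGF (fun θ => ∑ e, ψ (θ (ends e).1, θ (ends e).2) -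
        Fintype.card E * ∫ x, ψ x ∂(ν.prod ν))
      (∑ v, (endDegree ends v / 2) ^ 2) (Measure.pi fun _ : V => ν) := by
  have hbdd : HasBoundedDifferences (fun θ : V → X => ∑ e, ψ (θ (ends e).1, θ (ends e).2))
      fun v => endDegree ends v :=
    hasBoundedDifferences_sum _ (fun e θ => hψ01 _) fun e v hv θ x => by
      simp only [Finset.mem_insert, Finset.mem_singleton, not_or] at hv
      rw [Function.update_of_ne (Ne.symm hv.1), Function.update_of_ne (Ne.symm hv.2)]
  have hmean : ∫ θ, ∑ e, ψ (θ (ends e).1, θ (ends e).2) ∂(Measure.pi fun _ : V => ν) =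
      Fintype.card E * ∫ x, ψ x ∂(ν.prod ν) := by
    have hint : Integrable ψ (ν.prod ν) :=
      .of_mem_Icc 0 1 hψ.aemeasurable (ae_of_all _ hψ01)
    have hpair (e : E) := measurePreserving_eval_pair (fun _ : V => ν) (hloop e)
    have hpair_integral (e : E) : ∫ θ, ψ (θ (ends e).1, θ (ends e).2)
        ∂(Measure.pi fun _ : V => ν) = ∫ x, ψ x ∂(ν.prod ν) := by
      rw [← (hpair e).map_eq, integral_map (hpair e).aemeasurable hψ.aestronglyMeasurable]
    have hsum := integral_finsetSum Finset.univ fun e _ =>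
      (hpair e).integrable_comp_of_integrable hint
    simpa [Function.comp_def, hpair_integral] using hsum
  rw [← hmean]
  exact hasSubgaussianMGF_of_hasBoundedDifferences _
    (Finset.measurable_sum _ fun e _ => hψ.comp (by fun_prop)) hbdd

theorem hasSubgaussianMGF_edgeSum_obsLaw [DecidableEq V] {φ : (X × X) × Y' → ℝ}
    (hφ : Measurable φ) (hφ01 : ∀ z, φ z ∈ Set.Icc 0 1) (hloop : ∀ e, (ends e).1 ≠ (ends e).2) :
    HasSubgaussianMGF
      (fun p => edgeSum ends φ p - Fintype.card E * ∫ z, φ z ∂(ν.prod ν ⊗ₘ W))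
      (∑ v, (endDegree ends v / 2 : ℝ≥0) ^ 2 + Fintype.card E * (1 / 2) ^ 2) (obsLaw ν W ends) := by
  let ψ : X × X → ℝ := fun x => ∫ b, φ (x, b) ∂W x
  have hψ : Measurable ψ := hφ.stronglyMeasurable.integral_kernel_prod_right'.measurable
  have hψ01 (x : X × X) : ψ x ∈ Set.Icc 0 1 :=
    ⟨integral_nonneg fun b => (hφ01 _).1, by
      simpa using integral_mono_of_nonneg (μ := W x) (ae_of_all _ fun b => (hφ01 (x, b)).1)
        (integrable_const 1) (ae_of_all _ fun b => (hφ01 (x, b)).2)⟩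
  have hint : Integrable φ (ν.prod ν ⊗ₘ W) :=
    .of_mem_Icc 0 1 hφ.aemeasurable (ae_of_all _ hφ01)
  have hmeas : Measurable fun θ : V → X => ∑ e, ψ (θ (ends e).1, θ (ends e).2) :=
    Finset.measurable_sum _ fun e _ => hψ.comp (by fun_prop)
  rw [Measure.integral_compProd hint]
  refine (hasSubgaussianMGF_add_compProd (hasSubgaussianMGF_sum_ends ν ends hψ hψ01 hloop)
    ((measurable_edgeSum ends hφ).sub (hmeas.comp measurable_fst))
    (hasSubgaussianMGF_edgeSum_edgeKernel W ends hφ hφ01)).congr (ae_of_all _ fun p => ?_)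
  simp only [Pi.sub_apply, Function.comp_apply]
  ring

lemma measureReal_obsLaw_exists_le [DecidableEq V] [Fintype X] [Fintype Y']
    [MeasurableSingletonClass X] [MeasurableSingletonClass Y']
    (hloop : ∀ e, (ends e).1 ≠ (ends e).2) {τ : ℝ} (hτ : 0 ≤ τ) :
    (obsLaw ν W ends).real {p | ∃ z : (X × X) × Y', τ ≤
        |edgeSum ends (Set.indicator {z} 1) p - Fintype.card E * (ν.prod ν ⊗ₘ W).real {z}|} ≤
      2 * Fintype.card ((X × X) × Y') * Real.exp (-τ ^ 2 /
        (2 * (∑ v, (endDegree ends v / 2 : ℝ) ^ 2 + Fintype.card E * (1 / 2) ^ 2))) := by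
  have htail (z : (X × X) × Y') := measureReal_le_abs_le_of_hasSubgaussianMGF
    (hasSubgaussianMGF_edgeSum_obsLaw ν W ends (φ := Set.indicator {z} 1)
      (measurable_one.indicator (measurableSet_singleton z))
      (fun x => ⟨Set.indicator_nonneg (fun _ _ => zero_le_one) x,
        Set.indicator_le_self' (fun _ _ => zero_le_one) x⟩) hloop) hτ
  simp only [integral_indicator_one (measurableSet_singleton _)] at htail
  rw [Set.ofPred_exists]
  calc _ ≤ _ := measureReal_iUnion_fintype_le _
    _ ≤ _ := Finset.sum_le_sum fun z _ => htail z
    _ = _ := by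
        rw [Finset.sum_const, Finset.card_univ, nsmul_eq_mul]
        push_cast
        ring

end EdgeModel

section RegularGraph

variable {n k : ℕ} {g : Fin n → Fin n → Bool}

lemma fst_ne_snd_of_mem_edgesOf (e : edgesOf g) : (e : Fin n × Fin n).1 ≠ (e : Fin n × Fin n).2 :=
  (Finset.mem_filter.mp e.2).2.1.ne

lemma IsRegAdj.endDegree_edgesOf (hg : IsRegAdj n k g) (v : Fin n) :
    endDegree (Subtype.val : edgesOf g → Fin n × Fin n) v = k := by
  obtain ⟨hsymm, hirrefl, hreg⟩ := hg
  have hmem (e : Fin n × Fin n) : e ∈ edgesOf g ↔ e.1 < e.2 ∧ g e.1 e.2 = true := by simp [edgesOf]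
  rw [← hreg v, endDegree]
  refine Finset.card_bij (fun e _ => if e.1.1 = v then e.1.2 else e.1.1) ?_ ?_ ?_
  · rintro ⟨⟨a, b⟩, he⟩ hv
    grind
  · rintro ⟨⟨a, b⟩, he⟩ hv ⟨⟨a', b'⟩, he'⟩ hv'
    grind
  · intro u hu
    have : u ≠ v := by grind
    rcases this.lt_or_gt with h | h
    · exact ⟨⟨(u, v), by grind⟩, by grind⟩
    · exact ⟨⟨(v, u), by grind⟩, by grind⟩

lemma IsRegAdj.two_mul_card_edgesOf (hg : IsRegAdj n k g) : 2 * (edgesOf g).card = n * k := by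
  rw [← Fintype.card_coe, ← sum_endDegree _ fst_ne_snd_of_mem_edgesOf]
  simp [hg.endDegree_edgesOf]

end RegularGraph

section TypicalSet

variable [Fintype X] [Fintype Y'] {n : ℕ}

lemma card_mul_empEdge (g : Fin n → Fin n → Bool) (θ : Fin n → X) (y : Fin n × Fin n → Y')
    (x₁ x₂ : X) (b : Y') :
    (edgesOf g).card * empEdge g θ y x₁ x₂ b =
      edgeSum (Subtype.val : edgesOf g → _) (Set.indicator {((x₁, x₂), b)} 1)
        (θ, fun e => y e) := by
  let s := (edgesOf g).filter fun e => θ e.1 = x₁ ∧ θ e.2 = x₂ ∧ y e = b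
  have hs : ((edgesOf g).card : ℝ) = 0 → (s.card : ℝ) = 0 := by
    norm_cast
    exact fun h => Nat.le_zero.mp (h ▸ Finset.card_filter_le _ _)
  calc (edgesOf g).card * empEdge g θ y x₁ x₂ b = s.card := by
        rw [empEdge, ← div_eq_inv_mul, mul_div_cancel_of_imp' hs]
    _ = ∑ e ∈ edgesOf g, if θ e.1 = x₁ ∧ θ e.2 = x₂ ∧ y e = b then (1 : ℝ) else 0 :=
        (Finset.sum_boole _ _).symm
    _ = _ := by
        rw [edgeSum, ← Finset.sum_coe_sort]
        simp [Set.indicator_apply, and_assoc]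

lemma exists_le_abs_edgeSum_sub_of_lt_dTVedge [Nonempty X] [Nonempty Y'] {Q : X → X → Y' → ℝ}
    {g : Fin n → Fin n → Bool} {θ : Fin n → X} {y : Fin n × Fin n → Y'} {η : ℝ}
    (h : η < dTVedge Q g θ y) :
    ∃ z : (X × X) × Y', 2 * η * (edgesOf g).card / Fintype.card ((X × X) × Y') ≤
      |edgeSum (Subtype.val : edgesOf g → _) (Set.indicator {z} 1) (θ, fun e => y e) -
        (edgesOf g).card * nuBarE Q z.1.1 z.1.2 z.2| := by
  have hsum : ∑ _ : (X × X) × Y', 2 * η / Fintype.card ((X × X) × Y') <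
      ∑ z : (X × X) × Y', |empEdge g θ y z.1.1 z.1.2 z.2 - nuBarE Q z.1.1 z.1.2 z.2| := by
    rw [Finset.sum_const, Finset.card_univ, nsmul_eq_mul, mul_div_cancel₀ _ (by positivity)]
    simp only [Fintype.sum_prod_type]
    rw [dTVedge] at h
    linarith
  obtain ⟨z, -, hz⟩ := Finset.exists_lt_of_sum_lt hsum
  refine ⟨z, ?_⟩
  calc 2 * η * (edgesOf g).card / Fintype.card ((X × X) × Y')
      = (edgesOf g).card * (2 * η / Fintype.card ((X × X) × Y')) := by ring
    _ ≤ (edgesOf g).card * |empEdge g θ y z.1.1 z.1.2 z.2 - nuBarE Q z.1.1 z.1.2 z.2| := by gcongr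
    _ = _ := by
        rw [← card_mul_empEdge, ← mul_sub, abs_mul, Nat.abs_cast]

end TypicalSet

section RegModel

variable [MeasurableSpace X] [MeasurableSpace Y']

lemma measureReal_compProd_singleton_eq_nuBarE [Fintype X] [MeasurableSingletonClass X]
    [MeasurableSingletonClass Y'] {ν : Measure X} [SFinite ν] {W : Kernel (X × X) Y'}
    [IsSFiniteKernel W] {Q : X → X → Y' → ℝ} (hν : ∀ x, ν.real {x} = (Fintype.card X : ℝ)⁻¹)
    (hW : ∀ x b, (W x).real {b} = Q x.1 x.2 b) (z : (X × X) × Y') :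
    (ν.prod ν ⊗ₘ W).real {z} = nuBarE Q z.1.1 z.1.2 z.2 := by
  obtain ⟨⟨x₁, x₂⟩, b⟩ := z
  rw [measureReal_compProd_singleton, ← Set.singleton_prod_singleton, measureReal_prod_prod,
    hν, hν, hW, nuBarE]

variable {n k : ℕ} {g : Fin n → Fin n → Bool}

/-- The labels together with the observations on the edges of `g`: the data of the observation
model on the event that the random graph is `g`. -/
def RegSpace.edgeData (M : RegSpace X Y' n) (g : Fin n → Fin n → Bool) (ω : M.Ω) :
    (Fin n → X) × (edgesOf g → Y') :=
  (M.θ0 ω, fun e => M.Yobs e ω)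

variable [Fintype X] [Fintype Y'] {Q : X → X → Y' → ℝ} {M : RegSpace X Y' n}

lemma RegSpace.IsRegModel.measurable_edgeData (hM : M.IsRegModel Q k)
    (g : Fin n → Fin n → Bool) : Measurable (M.edgeData g) :=
  have ⟨_, hθ, _, hY, _⟩ := hM
  (measurable_pi_lambda _ fun v => (hθ v).mono le_rfl le_top).prodMk
    (measurable_pi_lambda _ fun e => (hY e).mono le_rfl le_top)

variable [DiscreteMeasurableSpace X] [DiscreteMeasurableSpace Y'] {ν : Measure X}
  [IsProbabilityMeasure ν] {W : Kernel (X × X) Y'} [IsMarkovKernel W]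

lemma RegSpace.IsRegModel.map_edgeData_restrict (hM : M.IsRegModel Q k)
    (hν : ∀ x, ν.real {x} = (Fintype.card X : ℝ)⁻¹) (hW : ∀ x b, (W x).real {b} = Q x.1 x.2 b)
    (hg : IsRegAdj n k g) :
    (M.P.restrict (M.G ⁻¹' {g})).map (M.edgeData g) =
      (Nat.card {g' : Fin n → Fin n → Bool // IsRegAdj n k g'} : ℝ≥0)⁻¹ •
        obsLaw ν W (Subtype.val : edgesOf g → Fin n × Fin n) := by
  have ⟨_, _, _, _, _, _, hlaw⟩ := hM
  obtain ⟨x⟩ := nonempty_of_isProbabilityMeasure ν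
  have := nonempty_of_isProbabilityMeasure (W (x, x))
  refine ext_iff_measureReal_singleton.mpr fun ⟨σ, y⟩ => ?_
  let y' := Function.extend Subtype.val y fun _ => Classical.arbitrary Y'
  have hy' (e : edgesOf g) : y' e = y e := Subtype.val_injective.extend_apply y _ e
  have hobs (ω : M.Ω) : (fun e : edgesOf g => M.Yobs e ω) = y ↔
      ∀ e ∈ edgesOf g, M.Yobs e ω = y' e := by
    simp only [funext_iff, ← hy', Subtype.forall]
  have hevent : M.edgeData g ⁻¹' {(σ, y)} ∩ M.G ⁻¹' {g} =
      {ω | M.G ω = g ∧ M.θ0 ω = σ ∧ ∀ e ∈ edgesOf g, M.Yobs e ω = y' e} := by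
    ext ω
    simp only [RegSpace.edgeData, Set.mem_inter_iff, Set.mem_preimage, Set.mem_singleton_iff,
      Prod.mk.injEq, hobs, Set.mem_ofPred_eq]
    exact and_comm
  rw [map_measureReal_apply (hM.measurable_edgeData g) (measurableSet_singleton _),
    measureReal_restrict_apply (hM.measurable_edgeData g (measurableSet_singleton _)),
    hevent, measureReal_nnreal_smul_apply, measureReal_obsLaw_singleton, measureReal_def,
    hlaw g hg σ _ fun _ => id, ← Finset.prod_coe_sort]
  simp [hν, hW, hy', mul_assoc]

lemma RegSpace.IsRegModel.measureReal_edgeData_inter_G (hM : M.IsRegModel Q k)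
    (hν : ∀ x, ν.real {x} = (Fintype.card X : ℝ)⁻¹) (hW : ∀ x b, (W x).real {b} = Q x.1 x.2 b)
    (hg : IsRegAdj n k g) (s : Set ((Fin n → X) × (edgesOf g → Y'))) :
    M.P.real (M.edgeData g ⁻¹' s ∩ M.G ⁻¹' {g}) =
      M.P.real (M.G ⁻¹' {g}) *
        (obsLaw ν W (Subtype.val : edgesOf g → Fin n × Fin n)).real s := by
  have hreal (s : Set ((Fin n → X) × (edgesOf g → Y'))) :
      M.P.real (M.edgeData g ⁻¹' s ∩ M.G ⁻¹' {g}) =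
        (Nat.card {g' : Fin n → Fin n → Bool // IsRegAdj n k g'} : ℝ≥0)⁻¹ *
          (obsLaw ν W (Subtype.val : edgesOf g → Fin n × Fin n)).real s := by
    have hs : MeasurableSet s := .of_discrete
    rw [← measureReal_restrict_apply (hM.measurable_edgeData g hs),
      ← map_measureReal_apply (hM.measurable_edgeData g) hs, hM.map_edgeData_restrict hν hW hg,
      measureReal_nnreal_smul_apply]
  have huniv := hreal Set.univ
  rw [Set.preimage_univ, Set.univ_inter, probReal_univ, mul_one] at huniv
  rw [hreal, huniv]

end RegModel

section Typicality

variable {n k : ℕ} {g : Fin n → Fin n → Bool}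

lemma IsRegAdj.log_sq_div_le (hg : IsRegAdj n k g) (hk : 1 ≤ k) (K : ℝ) :
    Real.log n ^ 2 / K ^ 2 ≤
      (2 * ηseq n * (edgesOf g).card / K) ^ 2 /
        (2 * (∑ v, (endDegree (Subtype.val : edgesOf g → Fin n × Fin n) v / 2 : ℝ) ^ 2 +
          Fintype.card (edgesOf g) * (1 / 2) ^ 2)) := by
  simp only [hg.endDegree_edgesOf, Fintype.card_coe, Finset.sum_const, Finset.card_univ,
    Fintype.card_fin, nsmul_eq_mul]
  rcases n.eq_zero_or_pos with rfl | hn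
  · rw [Nat.cast_zero, Real.log_zero, zero_pow two_ne_zero, zero_div]
    positivity
  have hm : ((edgesOf g).card : ℝ) = n * k / 2 := by
    rw [eq_div_iff two_ne_zero, mul_comm]
    exact_mod_cast hg.two_mul_card_edgesOf
  have hn' : (0 : ℝ) < n := by exact_mod_cast hn
  have hk' : (1 : ℝ) ≤ k := by exact_mod_cast hk
  have hτ : (2 * ηseq n * (edgesOf g).card / K) ^ 2 = Real.log n ^ 2 / K ^ 2 * (n * k ^ 2) := by
    rw [hm, ηseq]
    calc _ = Real.log n ^ 2 / K ^ 2 * (n ^ 2 * k ^ 2) / √n ^ 2 := by ring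
      _ = _ := by
        rw [Real.sq_sqrt hn'.le]
        field_simp
  have hvar : 2 * (n * ((k : ℝ) / 2) ^ 2 + (edgesOf g).card * (1 / 2) ^ 2) ≤ n * k ^ 2 := by
    rw [hm]
    nlinarith [mul_le_mul_of_nonneg_left hk' (by positivity : 0 ≤ (n : ℝ) * k)]
  rw [hτ, le_div_iff₀ (by positivity)]
  gcongr

variable [Fintype X] [Fintype Y'] [Nonempty X] [Nonempty Y'] {Q : X → X → Y' → ℝ}
  {M : RegSpace X Y' n}

lemma RegSpace.IsRegModel.measureReal_lt_dTVedge_inter_G_le [MeasurableSpace X]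
    [DiscreteMeasurableSpace X] [MeasurableSpace Y'] [DiscreteMeasurableSpace Y'] {ν : Measure X}
    [IsProbabilityMeasure ν] {W : Kernel (X × X) Y'} [IsMarkovKernel W] (hM : M.IsRegModel Q k)
    (hν : ∀ x, ν.real {x} = (Fintype.card X : ℝ)⁻¹) (hW : ∀ x b, (W x).real {b} = Q x.1 x.2 b)
    (hk : 1 ≤ k) (hg : IsRegAdj n k g) :
    M.P.real ({ω | ηseq n < dTVedge Q (M.G ω) (M.θ0 ω) fun e => M.Yobs e ω} ∩ M.G ⁻¹' {g}) ≤
      M.P.real (M.G ⁻¹' {g}) * (2 * Fintype.card ((X × X) × Y') *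
        Real.exp (-(Real.log n ^ 2 / Fintype.card ((X × X) × Y') ^ 2))) := by
  have := hM.1
  let τ : ℝ := 2 * ηseq n * (edgesOf g).card / Fintype.card ((X × X) × Y')
  have hτ : 0 ≤ τ := by
    have : 0 ≤ ηseq n := div_nonneg (Real.log_natCast_nonneg n) (Real.sqrt_nonneg n)
    positivity
  let B : Set ((Fin n → X) × (edgesOf g → Y')) := {p | ∃ z : (X × X) × Y', τ ≤
    |edgeSum Subtype.val (Set.indicator {z} 1) p -
      Fintype.card (edgesOf g) * (ν.prod ν ⊗ₘ W).real {z}|}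
  have hB : {ω | ηseq n < dTVedge Q (M.G ω) (M.θ0 ω) fun e => M.Yobs e ω} ∩ M.G ⁻¹' {g} ⊆
      M.edgeData g ⁻¹' B ∩ M.G ⁻¹' {g} := by
    rintro ω ⟨hω, rfl⟩
    obtain ⟨z, hz⟩ := exists_le_abs_edgeSum_sub_of_lt_dTVedge hω
    refine ⟨⟨z, ?_⟩, rfl⟩
    rwa [measureReal_compProd_singleton_eq_nuBarE hν hW, Fintype.card_coe]
  calc _ ≤ M.P.real (M.edgeData g ⁻¹' B ∩ M.G ⁻¹' {g}) := measureReal_mono hB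
    _ = M.P.real (M.G ⁻¹' {g}) * (obsLaw ν W (Subtype.val : edgesOf g → Fin n × Fin n)).real B :=
        hM.measureReal_edgeData_inter_G hν hW hg B
    _ ≤ _ := by
        gcongr
        refine (measureReal_obsLaw_exists_le ν W _ fst_ne_snd_of_mem_edgesOf hτ).trans ?_
        rw [neg_div]
        exact mul_le_mul_of_nonneg_left
          (Real.exp_le_exp.mpr (neg_le_neg (hg.log_sq_div_le hk _))) (by positivity)

theorem RegSpace.IsRegModel.measureReal_lt_dTVedge_le (hM : M.IsRegModel Q k)
    (hQ : ∀ x₁ x₂ b, 0 ≤ Q x₁ x₂ b) (hsum : ∀ x₁ x₂, ∑ b, Q x₁ x₂ b = 1) (hk : 1 ≤ k) :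
    M.P.real {ω | ηseq n < dTVedge Q (M.G ω) (M.θ0 ω) fun e => M.Yobs e ω} ≤
      2 * Fintype.card ((X × X) × Y') *
        Real.exp (-(Real.log n ^ 2 / Fintype.card ((X × X) × Y') ^ 2)) := by
  have ⟨_, _, hGmeas, _, _, hGreg, _⟩ := hM
  let : MeasurableSpace X := ⊤
  let : MeasurableSpace Y' := ⊤
  obtain ⟨W, _, hW⟩ := exists_isMarkovKernel_real_singleton_eq
    (q := fun x : X × X => Q x.1 x.2) (fun x => hQ x.1 x.2) fun x => hsum x.1 x.2
  have : IsProbabilityMeasure (uniformOn (Set.univ : Set X)) :=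
    isProbabilityMeasure_uniformOn Set.finite_univ Set.univ_nonempty
  have hG (s : Set (Fin n → Fin n → Bool)) : MeasurableSet (M.G ⁻¹' s) := hGmeas trivial
  refine measureReal_le_of_forall_inter_preimage_singleton_le (fun g => hG {g}) fun g => ?_
  by_cases hg : IsRegAdj n k g
  · exact hM.measureReal_lt_dTVedge_inter_G_le uniformOn_univ_real_singleton hW hk hg
  · have hnull : M.P.real (M.G ⁻¹' {g}) = 0 := by
      have hreg : ∀ᵐ ω ∂M.P, IsRegAdj n k (M.G ω) :=
        (prob_compl_eq_zero_iff (hG {g | IsRegAdj n k g})).mpr hGreg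
      rw [measureReal_eq_zero_iff]
      refine measure_mono_null ?_ hreg
      rintro ω rfl
      exact hg
    rw [hnull, zero_mul, ← hnull]
    exact measureReal_mono Set.inter_subset_right

end Typicality

theorem statement_10_general
    {X Y' : Type*} [Fintype X] [Fintype Y'] [Nonempty X] [Nonempty Y'] :
    ∃ c₀ : ℝ, 0 < c₀ ∧
      ∀ (Q : X → X → Y' → ℝ), (∀ x1 x2 y, 0 ≤ Q x1 x2 y) →
        (∀ x1 x2, ∑ y, Q x1 x2 y = 1) →
      ∀ k : ℕ, 1 ≤ k →
      ∀ n : ℕ,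
      ∀ M : RegSpace X Y' n, M.IsRegModel Q k →
        1 - c₀⁻¹ * Real.exp (-c₀ * (Real.log n) ^ 2) ≤
          (M.P {ω | M.θ0 ω ∈
            typicalSet Q (ηseq n) (M.G ω) (fun e => M.Yobs e ω)}).toReal := by
  let K : ℝ := Fintype.card ((X × X) × Y')
  have hK : 1 ≤ K := Nat.one_le_cast.mpr Fintype.card_pos
  refine ⟨(2 * K ^ 2)⁻¹, by positivity, fun Q hQ hsum k hk n M hM => ?_⟩
  have := hM.1
  let T : Set M.Ω := {ω | M.θ0 ω ∈ typicalSet Q (ηseq n) (M.G ω) fun e => M.Yobs e ω}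
  have hT : Tᶜ = {ω | ηseq n < dTVedge Q (M.G ω) (M.θ0 ω) fun e => M.Yobs e ω} := by
    ext ω
    simp [T, typicalSet]
  have hbound : 2 * K * Real.exp (-(Real.log n ^ 2 / K ^ 2)) ≤
      ((2 * K ^ 2)⁻¹)⁻¹ * Real.exp (-(2 * K ^ 2)⁻¹ * Real.log n ^ 2) := by
    rw [inv_inv, div_eq_inv_mul, neg_mul]
    gcongr <;> nlinarith
  have hcover : 1 ≤ M.P.real T + M.P.real Tᶜ := by
    rw [← probReal_univ (μ := M.P), ← Set.union_compl_self T]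
    exact measureReal_union_le _ _
  rw [hT] at hcover
  linarith [hM.measureReal_lt_dTVedge_le hQ hsum hk, measureReal_def M.P T]

/-- Lemma: the typical set contains the truth w.h.p.. -/
theorem statement_10
    {X Y' : Type*} [Fintype X] [Fintype Y'] [Nonempty X] [Nonempty Y']
    (hcard : 2 ≤ Fintype.card X) :
    ∃ c₀ : ℝ, 0 < c₀ ∧
      ∀ (Q : X → X → Y' → ℝ), (∀ x1 x2 y, 0 ≤ Q x1 x2 y) →
        (∀ x1 x2, ∑ y, Q x1 x2 y = 1) →
      ∀ k : ℕ, 3 ≤ k →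
      ∀ n : ℕ, Even (n * k) →
      ∀ M : RegSpace X Y' n, M.IsRegModel Q k →
        1 - c₀⁻¹ * Real.exp (-c₀ * (Real.log n) ^ 2) ≤
          (M.P {ω | M.θ0 ω ∈
            typicalSet Q (ηseq n) (M.G ω) (fun e => M.Yobs e ω)}).toReal := by
  obtain ⟨c₀, hc₀, h⟩ := statement_10_general (X := X) (Y' := Y')
  exact ⟨c₀, hc₀, fun Q hQ hsum k hk n _ => h Q hQ hsum k (by lia) n⟩

end
end
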